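/- Let σ > 0 and N ≥ 2 an integer, assume Π⁺ is continuously differentiable on (m, M) and that the limit Ψ⁺ₓ(M) = lim_{x→M⁻} (d/dx)Ψ⁺(x) exists, and let F : ℝ → (m, M) be a solution of equation (E). Then: (a) M − F is regularly varying at ∞ of index ρ⁺ = (Ψ⁺ₓ(M) − 1)/(1 − Ψ⁺ₓ(M)/N), i.e. for every x > 0, (M − F(αx))/(M − F(α)) → x^{ρ⁺} as α → ∞; (b) if moreover Ψ⁺ₓ(M) = 1 and there exist an integer n ≥ 1 and k ∈ (0, ∞) such that lim_{x→M⁻} (Ψ⁺(x) − x)/(M − x)^{n+1} = 1/k, then M − F(x) ∼ ((N/(N−1))·(n/k))^{−1/n}·(log x)^{−1/n} as x → ∞, i.e. the ratio of the two sides converges to 1. -/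

import Mathlib

open MeasureTheory Filter Set

/-- Centered Gaussian density with variance `σ²`. -/
noncomputable def gq (σ z : ℝ) : ℝ :=
  Real.exp (-(z ^ 2) / (2 * σ ^ 2)) / (σ * Real.sqrt (2 * Real.pi))

/-- The averaged kernel `q̄(σ,x,z)`. -/
noncomputable def gqbar (σ x z : ℝ) : ℝ :=
  if x = 0 then gq σ z else (1 / x) * ∫ y in (0:ℝ)..x, gq σ (y - z)

/-- `Φ⁺(y) = E[V·1_{V>y}]`. -/
noncomputable def Phip {Ω : Type*} [MeasurableSpace Ω] (P : Measure Ω) (V : Ω → ℝ) (y : ℝ) : ℝ :=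
  ∫ ω in {ω | V ω > y}, V ω ∂P

/-- `Π⁺(y) = P(V > y)`. -/
noncomputable def Pip {Ω : Type*} [MeasurableSpace Ω] (P : Measure Ω) (V : Ω → ℝ) (y : ℝ) : ℝ :=
  (P {ω | V ω > y}).toReal

/-- `Φ⁻(y) = E[V·1_{V≤y}]`. -/
noncomputable def Phim {Ω : Type*} [MeasurableSpace Ω] (P : Measure Ω) (V : Ω → ℝ) (y : ℝ) : ℝ :=
  ∫ ω in {ω | V ω ≤ y}, V ω ∂P

/-- `Π⁻(y) = P(V ≤ y)`. -/
noncomputable def Pim {Ω : Type*} [MeasurableSpace Ω] (P : Measure Ω) (V : Ω → ℝ) (y : ℝ) : ℝ :=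
  (P {ω | V ω ≤ y}).toReal

/-- `Ψ⁺ = Φ⁺/Π⁺`. -/
noncomputable def Psip {Ω : Type*} [MeasurableSpace Ω] (P : Measure Ω) (V : Ω → ℝ) (y : ℝ) : ℝ :=
  Phip P V y / Pip P V y

/-- `Ψ⁻ = Φ⁻/Π⁻`. -/
noncomputable def Psim {Ω : Type*} [MeasurableSpace Ω] (P : Measure Ω) (V : Ω → ℝ) (y : ℝ) : ℝ :=
  Phim P V y / Pim P V y

/-- `φ⁺_g`. -/
noncomputable def phip {Ω : Type*} [MeasurableSpace Ω] (P : Measure Ω) (V : Ω → ℝ)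
    (σ : ℝ) (g : ℝ → ℝ) (x : ℝ) : ℝ :=
  (∫ z, Phip P V (g z) * gq σ (x - z)) / (∫ z, Pip P V (g z) * gq σ (x - z))

/-- `φ⁻_g`. -/
noncomputable def phim {Ω : Type*} [MeasurableSpace Ω] (P : Measure Ω) (V : Ω → ℝ)
    (σ : ℝ) (g : ℝ → ℝ) (x : ℝ) : ℝ :=
  (∫ z, Phim P V (g z) * gq σ (x - z)) / (∫ z, Pim P V (g z) * gq σ (x - z))

/-- `φ_g`, equal to `φ⁺_g` on `[0,∞)` and `φ⁻_g` on `(−∞,0)`. -/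
noncomputable def phig {Ω : Type*} [MeasurableSpace Ω] (P : Measure Ω) (V : Ω → ℝ)
    (σ : ℝ) (g : ℝ → ℝ) (x : ℝ) : ℝ :=
  if 0 ≤ x then phip P V σ g x else phim P V σ g x

/-- The interior of the support of the law of `V` is `(m, M)` (with `V` bounded). -/
def SuppIoo {Ω : Type*} [MeasurableSpace Ω] (P : Measure Ω) (V : Ω → ℝ) (m M : ℝ) : Prop :=
  m < M ∧ (∀ᵐ ω ∂P, V ω ∈ Set.Icc m M) ∧
    (∀ y < M, 0 < P {ω | V ω > y}) ∧ (∀ y, m < y → 0 < P {ω | V ω ≤ y})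

/-- Equation (E). -/
def SolvesE {Ω : Type*} [MeasurableSpace Ω] (P : Measure Ω) (V : Ω → ℝ)
    (σ : ℝ) (N : ℕ) (F : ℝ → ℝ) : Prop :=
  ∀ x : ℝ, F x =
    ∫ z, ((1 / (N:ℝ)) * gq σ (x - z) + (((N:ℝ) - 1) / (N:ℝ)) * gqbar σ x z) * phig P V σ F z


open MeasureTheory Filter Set

lemma gq_eq {σ : ℝ} (hσ : 0 < σ) (y z : ℝ) :
    gq σ (y - z) = ProbabilityTheory.gaussianPDFReal y (Real.toNNReal (σ ^ 2)) z := by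
  unfold gq ProbabilityTheory.gaussianPDFReal
  rw [Real.coe_toNNReal _ (sq_nonneg σ)]
  rw [Real.sqrt_mul (by positivity) (σ ^ 2), Real.sqrt_sq hσ.le]
  rw [show (y - z) ^ 2 = (z - y) ^ 2 by ring, div_eq_inv_mul, mul_comm σ]

lemma gq_pos {σ : ℝ} (hσ : 0 < σ) (x : ℝ) : 0 < gq σ x := by
  unfold gq; positivity

lemma gq_cont (σ : ℝ) : Continuous (gq σ) := by
  unfold gq; fun_prop

lemma gq_int {σ : ℝ} (hσ : 0 < σ) (y : ℝ) : Integrable (fun z => gq σ (y - z)) := by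
  simp_rw [gq_eq hσ]
  exact ProbabilityTheory.integrable_gaussianPDFReal _ _

lemma gq_one {σ : ℝ} (hσ : 0 < σ) (y : ℝ) : ∫ z, gq σ (y - z) = 1 := by
  simp_rw [gq_eq hσ]
  apply ProbabilityTheory.integral_gaussianPDFReal_eq_one
  intro h
  have h1 : 0 < σ ^ 2 := by positivity
  rw [Real.toNNReal_eq_zero] at h
  linarith

/-- Gaussian tail bound function. -/
noncomputable def gt (σ d : ℝ) : ℝ := 2 * Real.exp (-(d ^ 2) / (4 * σ ^ 2))

lemma gt_pos (σ d : ℝ) : 0 < gt σ d := by unfold gt; positivity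

lemma gq_le_of_le {σ : ℝ} (hσ : 0 < σ) {d x : ℝ} (hd : d ^ 2 ≤ x ^ 2) :
    gq σ x ≤ gt σ d * gq (Real.sqrt 2 * σ) x := by
  have h2 : (Real.sqrt 2) ^ 2 = 2 := Real.sq_sqrt (by norm_num)
  have h3 : Real.sqrt 2 ≤ 2 := by
    rw [Real.sqrt_le_left (by norm_num)]; norm_num
  have h20 : 0 < Real.sqrt 2 := by positivity
  unfold gq gt
  have e1 : Real.exp (-(x ^ 2) / (2 * σ ^ 2)) ≤
      Real.exp (-(d ^ 2) / (4 * σ ^ 2)) * Real.exp (-(x ^ 2) / (2 * (Real.sqrt 2 * σ) ^ 2)) := by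
    rw [← Real.exp_add]
    apply Real.exp_le_exp.2
    rw [mul_pow, h2]
    have : -(d ^ 2) / (4 * σ ^ 2) + -(x ^ 2) / (2 * (2 * σ ^ 2)) - -(x ^ 2) / (2 * σ ^ 2)
      = (x ^ 2 - d ^ 2) / (4 * σ ^ 2) := by field_simp; ring
    have : 0 ≤ (x ^ 2 - d ^ 2) / (4 * σ ^ 2) := by
      apply div_nonneg; linarith; positivity
    linarith
  have hp : 0 < σ * Real.sqrt (2 * Real.pi) := by positivity
  rw [div_le_iff₀ hp]
  refine e1.trans ?_
  have : 2 * Real.exp (-(d ^ 2) / (4 * σ ^ 2)) *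
      (Real.exp (-(x ^ 2) / (2 * (Real.sqrt 2 * σ) ^ 2)) / (Real.sqrt 2 * σ * Real.sqrt (2 * Real.pi))) * (σ * Real.sqrt (2 * Real.pi))
     = (2 / Real.sqrt 2) * (Real.exp (-(d ^ 2) / (4 * σ ^ 2)) * Real.exp (-(x ^ 2) / (2 * (Real.sqrt 2 * σ) ^ 2))) := by
    field_simp
  rw [this]
  have h4 : 1 ≤ 2 / Real.sqrt 2 := by rw [le_div_iff₀ h20]; linarith
  have h5 : 0 ≤ Real.exp (-(d ^ 2) / (4 * σ ^ 2)) * Real.exp (-(x ^ 2) / (2 * (Real.sqrt 2 * σ) ^ 2)) := by positivity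
  nlinarith

lemma gq_tail {σ : ℝ} (hσ : 0 < σ) {d : ℝ} (hd : 0 ≤ d) (y : ℝ) :
    ∫ z in (Icc (y - d) (y + d))ᶜ, gq σ (y - z) ≤ gt σ d := by
  have h2σ : 0 < Real.sqrt 2 * σ := by positivity
  calc ∫ z in (Icc (y - d) (y + d))ᶜ, gq σ (y - z)
      ≤ ∫ z in (Icc (y - d) (y + d))ᶜ, gt σ d * gq (Real.sqrt 2 * σ) (y - z) := by
        apply setIntegral_mono_on (gq_int hσ y).integrableOn
          ((gq_int h2σ y).const_mul _).integrableOn measurableSet_Icc.compl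
        intro z hz
        apply gq_le_of_le hσ
        rw [sq_le_sq, abs_of_nonneg hd]
        simp only [mem_compl_iff, mem_Icc, not_and_or, not_le] at hz
        rcases hz with hz | hz
        · exact le_trans (by linarith) (le_abs_self _)
        · exact le_trans (by linarith) (neg_le_abs _)
    _ ≤ ∫ z, gt σ d * gq (Real.sqrt 2 * σ) (y - z) := by
        apply setIntegral_le_integral ((gq_int h2σ y).const_mul _)
        exact Filter.Eventually.of_forall fun z => mul_nonneg (gt_pos _ _).le (gq_pos h2σ _).le
    _ = gt σ d := by rw [integral_const_mul, gq_one h2σ, mul_one]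

lemma gq_body {σ : ℝ} (hσ : 0 < σ) {d : ℝ} (hd : 0 ≤ d) (y : ℝ) :
    1 - gt σ d ≤ ∫ z in Icc (y - d) (y + d), gq σ (y - z) := by
  have := integral_add_compl (μ := volume) (measurableSet_Icc (a := y - d) (b := y + d)) (gq_int hσ y)
  rw [gq_one hσ] at this
  linarith [gq_tail hσ hd y]

lemma gq_anti {σ : ℝ} (hσ : 0 < σ) {x r : ℝ} (h : x ^ 2 ≤ r ^ 2) : gq σ r ≤ gq σ x := by
  unfold gq
  gcongr

/-- Gaussian smoothing. -/
noncomputable def gc (σ : ℝ) (h : ℝ → ℝ) (y : ℝ) : ℝ := ∫ z, gq σ (y - z) * h z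

lemma gq_mul_int {σ : ℝ} (hσ : 0 < σ) {h : ℝ → ℝ} {C : ℝ} (hm : Measurable h) (hb : ∀ z, |h z| ≤ C) (y : ℝ) :
    Integrable (fun z => gq σ (y - z) * h z) := by
  apply (gq_int hσ y).mul_bdd (c := C) hm.aestronglyMeasurable
  exact Filter.Eventually.of_forall hb

/-- Splitting estimate for smoothed functions: upper. -/
lemma gc_le {σ : ℝ} (hσ : 0 < σ) {h : ℝ → ℝ} {H c d y : ℝ} (hm : Measurable h) (h0 : ∀ z, 0 ≤ h z) (hH : ∀ z, h z ≤ H)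
    (hd : 0 ≤ d) (hc0 : 0 ≤ c) (hc : ∀ z ∈ Icc (y - d) (y + d), h z ≤ c) : gc σ h y ≤ c + H * gt σ d := by
  have hb : ∀ z, |h z| ≤ H := fun z => by rw [abs_of_nonneg (h0 z)]; exact hH z
  have hI := gq_mul_int hσ hm hb y
  have hHn : 0 ≤ H := (h0 0).trans (hH 0)
  unfold gc
  rw [← integral_add_compl (measurableSet_Icc (a := y - d) (b := y + d)) hI]
  apply add_le_add
  · calc _ ≤ ∫ z in Icc (y - d) (y + d), gq σ (y - z) * c := by
          apply setIntegral_mono_on hI.integrableOn ((gq_int hσ y).mul_const c).integrableOn measurableSet_Icc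
          intro z hz
          exact mul_le_mul_of_nonneg_left (hc z hz) (gq_pos hσ _).le
      _ ≤ ∫ z, gq σ (y - z) * c := by
          apply setIntegral_le_integral ((gq_int hσ y).mul_const c)
          exact Filter.Eventually.of_forall fun z => mul_nonneg (gq_pos hσ _).le hc0
      _ = c := by rw [integral_mul_const, gq_one hσ, one_mul]
  · calc _ ≤ ∫ z in (Icc (y - d) (y + d))ᶜ, gq σ (y - z) * H := by
          apply setIntegral_mono_on hI.integrableOn ((gq_int hσ y).mul_const H).integrableOn measurableSet_Icc.compl
          intro z hz
          exact mul_le_mul_of_nonneg_left (hH z) (gq_pos hσ _).le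
      _ ≤ H * gt σ d := by
          rw [integral_mul_const, mul_comm]
          exact mul_le_mul_of_nonneg_left (gq_tail hσ hd y) hHn

lemma gc_ge {σ : ℝ} (hσ : 0 < σ) {h : ℝ → ℝ} {H c d y : ℝ} (hm : Measurable h) (h0 : ∀ z, 0 ≤ h z) (hH : ∀ z, h z ≤ H)
    (hd : 0 ≤ d) (hc0 : 0 ≤ c) (hc : ∀ z ∈ Icc (y - d) (y + d), c ≤ h z) : c * (1 - gt σ d) ≤ gc σ h y := by
  have hb : ∀ z, |h z| ≤ H := fun z => by rw [abs_of_nonneg (h0 z)]; exact hH z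
  have hI := gq_mul_int hσ hm hb y
  unfold gc
  calc c * (1 - gt σ d) ≤ ∫ z in Icc (y - d) (y + d), gq σ (y - z) * c := by
          rw [integral_mul_const, mul_comm]
          exact mul_le_mul_of_nonneg_right (gq_body hσ hd y) hc0
    _ ≤ ∫ z in Icc (y - d) (y + d), gq σ (y - z) * h z := by
          apply setIntegral_mono_on ((gq_int hσ y).mul_const c).integrableOn hI.integrableOn measurableSet_Icc
          intro z hz
          exact mul_le_mul_of_nonneg_left (hc z hz) (gq_pos hσ _).le
    _ ≤ _ := by
          apply setIntegral_le_integral hI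
          exact Filter.Eventually.of_forall fun z => mul_nonneg (gq_pos hσ _).le (h0 z)

lemma gc_cont {σ : ℝ} (hσ : 0 < σ) {h : ℝ → ℝ} {C : ℝ} (hm : Measurable h) (hb : ∀ z, |h z| ≤ C) :
    Continuous (gc σ h) := by
  rw [continuous_iff_continuousAt]
  intro y0
  have h2σ : 0 < Real.sqrt 2 * σ := by positivity
  have h2 : (Real.sqrt 2) ^ 2 = 2 := Real.sq_sqrt (by norm_num)
  have hC : 0 ≤ C := (abs_nonneg _).trans (hb 0)
  unfold gc
  apply continuousAt_of_dominated (bound := fun z => (Real.exp (1 / (2 * σ ^ 2)) * Real.sqrt 2) * gq (Real.sqrt 2 * σ) (y0 - z) * C)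
  · exact Filter.Eventually.of_forall fun y => (gq_mul_int hσ hm hb y).aestronglyMeasurable
  · filter_upwards [Metric.ball_mem_nhds y0 one_pos] with y hy
    refine Filter.Eventually.of_forall fun z => ?_
    rw [Real.norm_eq_abs, abs_mul, abs_of_pos (gq_pos hσ _)]
    apply mul_le_mul _ (hb z) (abs_nonneg _)
    · have := gq_pos h2σ (y0 - z); positivity
    unfold gq
    rw [mul_pow, h2]
    rw [Metric.mem_ball, Real.dist_eq] at hy
    have hp : 0 < σ * Real.sqrt (2 * Real.pi) := by positivity
    have e : Real.exp (1 / (2 * σ ^ 2)) * Real.sqrt 2 * (Real.exp (-(y0 - z) ^ 2 / (2 * (2 * σ ^ 2))) / (Real.sqrt 2 * σ * Real.sqrt (2 * Real.pi)))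
      = Real.exp (1 / (2 * σ ^ 2) + -(y0 - z) ^ 2 / (2 * (2 * σ ^ 2))) / (σ * Real.sqrt (2 * Real.pi)) := by
      rw [Real.exp_add]; field_simp
    rw [e]
    apply div_le_div_of_nonneg_right _ hp.le
    apply Real.exp_le_exp.2
    have e2 : 1 / (2 * σ ^ 2) + -(y0 - z) ^ 2 / (2 * (2 * σ ^ 2)) - -(y - z) ^ 2 / (2 * σ ^ 2)
       = (2 + 2 * (y - z) ^ 2 - (y0 - z) ^ 2) / (4 * σ ^ 2) := by field_simp; ring
    have h1 : (y - y0) ^ 2 ≤ 1 := by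
      have := abs_lt.1 hy; nlinarith
    have : 0 ≤ (2 + 2 * (y - z) ^ 2 - (y0 - z) ^ 2) / (4 * σ ^ 2) := by
      apply div_nonneg _ (by positivity)
      nlinarith [sq_nonneg ((y - z) + (y - y0))]
    linarith
  · exact (((gq_int h2σ y0).const_mul _).mul_const _)
  · refine Filter.Eventually.of_forall fun z => ?_
    have := gq_cont σ
    fun_prop

open MeasureTheory Filter Set

structure Core (σ H : ℝ) (N : ℕ) (p S u h : ℝ → ℝ) : Prop where
  σ_pos : 0 < σ
  H_pos : 0 < H
  N2 : 2 ≤ N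
  p_pos : ∀ v, 0 < v → 0 < p v
  p_le : ∀ v, 0 < v → p v ≤ 1
  p_mono : ∀ v w, 0 < v → v ≤ w → p v ≤ p w
  S_nonneg : ∀ v, 0 < v → 0 ≤ S v
  S_mono : ∀ v w, 0 < v → v ≤ w → S v ≤ S w
  S_leH : ∀ v, 0 < v → S v ≤ H
  S_gap : ∀ b v, 0 < b → b ≤ v → S v ≤ v - (v - b) * p b
  u_pos : ∀ x, 0 < u x
  u_le : ∀ x, u x ≤ H
  pu_meas : Measurable fun z => p (u z)
  Su_meas : Measurable fun z => S (u z)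
  h_meas : Measurable h
  h_nonneg : ∀ z, 0 ≤ h z
  h_le : ∀ z, h z ≤ H
  h_eq : ∀ y, 0 ≤ y → h y = gc σ (fun z => S (u z) * p (u z)) y / gc σ (fun z => p (u z)) y
  u_eq : ∀ x, 0 < x → u x = gc σ h x / N + (1 - 1 / (N:ℝ)) * ((∫ y in (0:ℝ)..x, gc σ h y) / x)

lemma gc_add {σ : ℝ} (hσ : 0 < σ) {f k : ℝ → ℝ} {C D : ℝ} (hf : Measurable f) (hfb : ∀ z, |f z| ≤ C)
    (hk : Measurable k) (hkb : ∀ z, |k z| ≤ D) (y : ℝ) :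
    gc σ (fun z => f z + k z) y = gc σ f y + gc σ k y := by
  unfold gc
  rw [← integral_add (gq_mul_int hσ hf hfb y) (gq_mul_int hσ hk hkb y)]
  simp_rw [mul_add]

lemma gc_const_mul {σ : ℝ} {f : ℝ → ℝ} (c y : ℝ) :
    gc σ (fun z => c * f z) y = c * gc σ f y := by
  unfold gc
  rw [← integral_const_mul]
  congr 1; ext z; ring

lemma gc_const {σ : ℝ} (hσ : 0 < σ) (c y : ℝ) :
    gc σ (fun _ => c) y = c := by
  unfold gc
  rw [integral_mul_const, gq_one hσ, one_mul]

lemma gc_mono {σ : ℝ} (hσ : 0 < σ) {f k : ℝ → ℝ} {C D : ℝ} (hf : Measurable f) (hfb : ∀ z, |f z| ≤ C)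
    (hk : Measurable k) (hkb : ∀ z, |k z| ≤ D) (hfk : ∀ z, f z ≤ k z) (y : ℝ) :
    gc σ f y ≤ gc σ k y := by
  unfold gc
  apply integral_mono (gq_mul_int hσ hf hfb y) (gq_mul_int hσ hk hkb y)
  intro z
  exact mul_le_mul_of_nonneg_left (hfk z) (gq_pos hσ _).le

namespace Core
variable {σ H : ℝ} {N : ℕ} {p S u h : ℝ → ℝ}

lemma S_le (c : Core σ H N p S u h) {v : ℝ} (hv : 0 < v) : S v ≤ v := by
  have := c.S_gap v v hv le_rfl
  linarith

lemma pu_bd (c : Core σ H N p S u h) (z : ℝ) : |p (u z)| ≤ 1 := by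
  rw [abs_of_pos (c.p_pos _ (c.u_pos z))]; exact c.p_le _ (c.u_pos z)

lemma Su_bd (c : Core σ H N p S u h) (z : ℝ) : |S (u z)| ≤ H := by
  rw [abs_of_nonneg (c.S_nonneg _ (c.u_pos z))]; exact c.S_leH _ (c.u_pos z)

lemma Spu_meas (c : Core σ H N p S u h) : Measurable fun z => S (u z) * p (u z) := c.Su_meas.mul c.pu_meas

lemma Spu_bd (c : Core σ H N p S u h) (z : ℝ) : |S (u z) * p (u z)| ≤ H := by
  rw [abs_mul]
  have h1 := c.Su_bd z
  have h2 := c.pu_bd z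
  have := abs_nonneg (S (u z))
  have := abs_nonneg (p (u z))
  nlinarith

lemma h_lower (c : Core σ H N p S u h) {y d v : ℝ} (hy : 0 ≤ y) (hd : 0 ≤ d) (hτ : gt σ d ≤ 1 / 2) (hv : 0 < v)
    (huv : ∀ z ∈ Icc (y - d) (y + d), v ≤ u z) : S v * (1 - 2 * gt σ d) ≤ h y := by
  have hσ := c.σ_pos
  have hτ0 := gt_pos σ d
  have hpv := c.p_pos v hv
  have hpv1 := c.p_le v hv
  have hSv := c.S_nonneg v hv
  have hSH := c.S_leH v hv
  have hH := c.H_pos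
  -- denominator
  have hden : p v * (1 - gt σ d) ≤ gc σ (fun z => p (u z)) y :=
    gc_ge hσ (H := 1) c.pu_meas (fun z => (c.p_pos _ (c.u_pos z)).le) (fun z => c.p_le _ (c.u_pos z)) hd hpv.le
      (fun z hz => c.p_mono _ _ hv (huv z hz))
  have hk0 : ∀ z, -(S v * p v) ≤ S (u z) * p (u z) + (-(S v)) * p (u z) := by
    intro z
    have hp := c.p_pos _ (c.u_pos z)
    rcases le_total v (u z) with h1 | h1
    · have := c.S_mono _ _ hv h1
      nlinarith [mul_nonneg hSv hpv.le]
    · have h2 := c.p_mono _ _ (c.u_pos z) h1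
      have := c.S_nonneg _ (c.u_pos z)
      nlinarith [mul_nonneg this hp.le]
  have hm : Measurable (fun z => (S (u z) * p (u z) + (-(S v)) * p (u z)) + S v * p v) :=
    (c.Spu_meas.add (c.pu_meas.const_mul _)).add_const _
  have hnum := gc_ge hσ (h := fun z => (S (u z) * p (u z) + (-(S v)) * p (u z)) + S v * p v) (H := H + H) (c := S v * p v)
    (y := y) (d := d) hm (fun z => by linarith [hk0 z]) (fun z => by
      have := (abs_le.1 (c.Spu_bd z)).2
      have := c.p_pos _ (c.u_pos z)
      nlinarith [mul_nonneg hSv this.le]) hd (by positivity) (fun z hz => by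
      have := c.S_mono _ _ hv (huv z hz)
      have hp := c.p_pos _ (c.u_pos z)
      nlinarith)
  have hb2 : ∀ z, |(-(S v)) * p (u z)| ≤ H := fun z => by
    rw [abs_mul, abs_neg, abs_of_nonneg hSv]
    have := c.pu_bd z
    have := abs_nonneg (p (u z))
    nlinarith
  have hm1 : Measurable (fun z => S (u z) * p (u z) + (-(S v)) * p (u z)) := c.Spu_meas.add (c.pu_meas.const_mul _)
  rw [gc_add hσ (C := H + H) (D := H) hm1 (fun z => (abs_add_le _ _).trans (add_le_add (c.Spu_bd z) (hb2 z)))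
    measurable_const (fun z => by rw [abs_of_nonneg (by positivity)]; nlinarith), gc_const hσ,
    gc_add hσ c.Spu_meas c.Spu_bd (c.pu_meas.const_mul _) hb2, gc_const_mul] at hnum
  rw [c.h_eq y hy]
  have hD : 0 < gc σ (fun z => p (u z)) y := lt_of_lt_of_le (by nlinarith) hden
  rw [le_div_iff₀ hD]
  -- num ≥ S v * D - S v p v τ
  have h3 : p v ≤ 2 * gc σ (fun z => p (u z)) y := by nlinarith
  have h4 : S v * gt σ d * p v ≤ S v * gt σ d * (2 * gc σ (fun z => p (u z)) y) :=
    mul_le_mul_of_nonneg_left h3 (by positivity)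
  nlinarith

lemma h_upper (c : Core σ H N p S u h) {y d s D0 : ℝ} (hy : 0 ≤ y) (hd : 0 ≤ d) (hD0 : 0 < D0)
    (hD : D0 ≤ gc σ (fun z => p (u z)) y)
    (hs : ∀ z ∈ Icc (y - d) (y + d), S (u z) ≤ s) (hs0 : 0 ≤ s) : h y ≤ s + H * gt σ d / D0 := by
  have hσ := c.σ_pos
  have hτ0 := gt_pos σ d
  have hH := c.H_pos
  have hkm : Measurable (fun z => max (S (u z) - s) 0 * p (u z)) :=
    ((c.Su_meas.sub_const s).max measurable_const).mul c.pu_meas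
  have hk0 : ∀ z, 0 ≤ max (S (u z) - s) 0 * p (u z) := fun z =>
    mul_nonneg (le_max_right _ _) (c.p_pos _ (c.u_pos z)).le
  have hkH : ∀ z, max (S (u z) - s) 0 * p (u z) ≤ H := fun z => by
    have h1 : max (S (u z) - s) 0 ≤ H := max_le (by linarith [c.S_leH _ (c.u_pos z)]) hH.le
    have := c.p_le _ (c.u_pos z)
    have := c.p_pos _ (c.u_pos z)
    have := le_max_right (S (u z) - s) 0
    nlinarith
  have hk := gc_le hσ (c := 0) hkm hk0 hkH hd le_rfl (y := y) (fun z hz => by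
    rw [max_eq_right (by linarith [hs z hz]), zero_mul])
  have hb2 : ∀ z, |s * p (u z)| ≤ s := fun z => by
    rw [abs_mul, abs_of_nonneg hs0]
    have := c.pu_bd z
    have := abs_nonneg (p (u z))
    nlinarith
  have hkb : ∀ z, |max (S (u z) - s) 0 * p (u z)| ≤ H := fun z => by rw [abs_of_nonneg (hk0 z)]; exact hkH z
  have hnum : gc σ (fun z => S (u z) * p (u z)) y ≤ s * gc σ (fun z => p (u z)) y + H * gt σ d := by
    calc _ ≤ gc σ (fun z => s * p (u z) + max (S (u z) - s) 0 * p (u z)) y := by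
          have hm1 : Measurable (fun z => s * p (u z) + max (S (u z) - s) 0 * p (u z)) := (c.pu_meas.const_mul _).add hkm
          apply gc_mono hσ (D := s + H) c.Spu_meas c.Spu_bd hm1
            (fun z => (abs_add_le _ _).trans (add_le_add (hb2 z) (hkb z)))
          intro z
          have := le_max_left (S (u z) - s) 0
          have := c.p_pos _ (c.u_pos z)
          nlinarith
      _ = s * gc σ (fun z => p (u z)) y + gc σ (fun z => max (S (u z) - s) 0 * p (u z)) y := by
          rw [gc_add hσ (c.pu_meas.const_mul _) hb2 hkm hkb, gc_const_mul]
      _ ≤ _ := by linarith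
  rw [c.h_eq y hy]
  have hDp := hD0.trans_le hD
  rw [div_le_iff₀ hDp]
  have : H * gt σ d ≤ H * gt σ d / D0 * gc σ (fun z => p (u z)) y := by
    rw [div_mul_eq_mul_div, le_div_iff₀ hD0]
    exact mul_le_mul_of_nonneg_left hD (by positivity)
  nlinarith

/-- lower bound of the smoothed function -/
lemma g_lower (c : Core σ H N p S u h) {y d v : ℝ} (hy : d ≤ y) (hd : 0 ≤ d) (hτ : gt σ d ≤ 1 / 2) (hv : 0 < v)
    (huv : ∀ z ∈ Icc (y - 2 * d) (y + 2 * d), v ≤ u z) : S v - 3 * gt σ d * S v ≤ gc σ h y := by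
  have hτ0 := gt_pos σ d
  have hSv := c.S_nonneg v hv
  have := gc_ge c.σ_pos (c := S v * (1 - 2 * gt σ d)) (y := y) (d := d) c.h_meas c.h_nonneg c.h_le hd
    (by apply mul_nonneg hSv; linarith) (fun z hz => by
      apply c.h_lower (by linarith [hz.1]) hd hτ hv
      intro w hw
      exact huv w ⟨by linarith [hw.1, hz.1], by linarith [hw.2, hz.2]⟩)
  have h2 : 0 ≤ S v * (gt σ d) ^ 2 := by positivity
  nlinarith

lemma g_upper (c : Core σ H N p S u h) {y d v D0 : ℝ} (hy : d ≤ y) (hd : 0 ≤ d) (hD0 : 0 < D0)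
    (hD : ∀ y' ∈ Icc (y - d) (y + d), D0 ≤ gc σ (fun z => p (u z)) y') (hv : 0 < v)
    (huv : ∀ z ∈ Icc (y - 2 * d) (y + 2 * d), u z ≤ v) : gc σ h y ≤ S v + H * gt σ d / D0 + H * gt σ d := by
  have hτ0 := gt_pos σ d
  have hSv := c.S_nonneg v hv
  have hH := c.H_pos
  apply gc_le c.σ_pos c.h_meas c.h_nonneg c.h_le hd
  · positivity
  · intro z hz
    apply c.h_upper (by linarith [hz.1]) hd hD0 (hD z hz) _ hSv
    intro w hw
    exact c.S_mono _ _ (c.u_pos w) (huv w ⟨by linarith [hw.1, hz.1], by linarith [hw.2, hz.2]⟩)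

end Core

open MeasureTheory Filter Set

/-- First-touch barrier lemma. -/
lemma barrier {f f' : ℝ → ℝ} {a : ℝ} (hf : ∀ x, a ≤ x → HasDerivAt f (f' x) x) (h0 : 0 < f a)
    (hstep : ∀ x, a < x → f x = 0 → (∀ y, a ≤ y → y < x → 0 < f y) → 0 < f' x) :
    ∀ x, a ≤ x → 0 < f x := by
  by_contra hcon
  push Not at hcon
  obtain ⟨b, hab, hb⟩ := hcon
  have hcont : ContinuousOn f (Icc a b) := fun x hx => (hf x hx.1).continuousAt.continuousWithinAt
  have hK : IsCompact (Icc a b ∩ f ⁻¹' Iic 0) := by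
    apply isCompact_Icc.of_isClosed_subset _ inter_subset_left
    exact hcont.preimage_isClosed_of_isClosed isClosed_Icc isClosed_Iic
  obtain ⟨t, ⟨ht1, ht2⟩, htmin⟩ := hK.exists_isLeast ⟨b, ⟨hab, le_rfl⟩, hb⟩
  simp only [mem_preimage, mem_Iic] at ht2
  have hpos : ∀ y, a ≤ y → y < t → 0 < f y := by
    intro y hy1 hy2
    by_contra hy3
    have := htmin ⟨⟨hy1, hy2.le.trans ht1.2⟩, not_lt.1 hy3⟩
    linarith
  have hat : a < t := by
    rcases ht1.1.lt_or_eq with h | h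
    · exact h
    · subst h; linarith
  have hft : f t = 0 := by
    apply le_antisymm ht2
    have : Tendsto f (nhdsWithin t (Iio t)) (nhds (f t)) := (hf t ht1.1).continuousAt.mono_left nhdsWithin_le_nhds
    apply ge_of_tendsto this
    filter_upwards [Ioo_mem_nhdsLT hat] with y hy
    exact (hpos y hy.1.le hy.2).le
  have hd := hstep t hat hft hpos
  have hslope := (hasDerivAt_iff_tendsto_slope.1 (hf t ht1.1))
  have h1 : Tendsto (slope f t) (nhdsWithin t (Iio t)) (nhds (f' t)) :=
    hslope.mono_left (nhdsWithin_mono _ (fun y hy => ne_of_lt hy))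
  have h2 : f' t ≤ 0 := by
    apply le_of_tendsto h1
    filter_upwards [Ioo_mem_nhdsLT hat] with y hy
    rw [slope_def_field, hft, sub_zero]
    apply div_nonpos_of_nonneg_of_nonpos (hpos y hy.1.le hy.2).le
    linarith [hy.2]
  linarith

lemma barrier_event {f f' : ℝ → ℝ} {a k : ℝ} (hk : 0 < k) (hf : ∀ x, a ≤ x → HasDerivAt f (f' x) x)
    (hstep : ∀ x, a ≤ x → 0 ≤ f x → f' x ≤ -k) : ∀ᶠ x in atTop, f x ≤ 0 := by
  by_cases hex : ∃ b, a ≤ b ∧ f b < 0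
  · obtain ⟨b, hab, hb⟩ := hex
    have := barrier (f := fun x => - f x) (f' := fun x => - f' x) (a := b)
      (fun x hx => (hf x (hab.trans hx)).neg) (by linarith) (fun x hx hx0 _ => by
        have := hstep x (hab.trans hx.le) (by linarith); linarith)
    filter_upwards [eventually_ge_atTop b] with x hx
    linarith [this x hx]
  · push Not at hex
    exfalso
    set b := a + (f a + 1) / k
    have hfa := hex a le_rfl
    have hab : a < b := by
      have : 0 < (f a + 1) / k := by positivity
      simp only [b]; linarith
    obtain ⟨ξ, hξ, he⟩ := exists_hasDerivAt_eq_slope f f' hab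
      (fun x hx => (hf x hx.1).continuousAt.continuousWithinAt) (fun x hx => hf x hx.1.le)
    have h1 := hstep ξ hξ.1.le (hex ξ hξ.1.le)
    rw [he, div_le_iff₀ (by linarith)] at h1
    have h2 : k * (b - a) = f a + 1 := by simp only [b]; field_simp; ring
    have := hex b hab.le
    linarith

/-- primitive of the smoothed function -/
noncomputable def BB (σ : ℝ) (h : ℝ → ℝ) (x : ℝ) : ℝ := ∫ y in (0:ℝ)..x, gc σ h y

/-- average of the smoothed function -/
noncomputable def AA (σ : ℝ) (h : ℝ → ℝ) (x : ℝ) : ℝ := BB σ h x / x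

namespace Core
variable {σ H : ℝ} {N : ℕ} {p S u h : ℝ → ℝ}

lemma h_bd (c : Core σ H N p S u h) (z : ℝ) : |h z| ≤ H := by
  rw [abs_of_nonneg (c.h_nonneg z)]; exact c.h_le z

lemma g_nonneg (c : Core σ H N p S u h) (y : ℝ) : 0 ≤ gc σ h y :=
  integral_nonneg fun z => mul_nonneg (gq_pos c.σ_pos _).le (c.h_nonneg z)

lemma g_le (c : Core σ H N p S u h) (y : ℝ) : gc σ h y ≤ H := by
  have := gc_mono c.σ_pos c.h_meas c.h_bd (measurable_const (a := H)) (D := H) (fun _ => by rw [abs_of_pos c.H_pos]) c.h_le y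
  rwa [gc_const c.σ_pos] at this

lemma g_cont (c : Core σ H N p S u h) : Continuous (gc σ h) := gc_cont c.σ_pos c.h_meas c.h_bd

lemma BB_deriv (c : Core σ H N p S u h) (x : ℝ) : HasDerivAt (BB σ h) (gc σ h x) x := by
  unfold BB
  exact intervalIntegral.integral_hasDerivAt_right (c.g_cont.intervalIntegrable _ _)
    (c.g_cont.stronglyMeasurableAtFilter _ _) c.g_cont.continuousAt

lemma BB_incr (c : Core σ H N p S u h) {x y G : ℝ} (hxy : x ≤ y) (hG : ∀ z ∈ Icc x y, gc σ h z ≤ G) :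
    BB σ h y - BB σ h x ≤ G * (y - x) := by
  rcases hxy.lt_or_eq with h1 | h1
  · obtain ⟨ξ, hξ, he⟩ := exists_hasDerivAt_eq_slope (BB σ h) (gc σ h) h1
      (fun x _ => (c.BB_deriv x).continuousAt.continuousWithinAt) (fun x _ => c.BB_deriv x)
    have := hG ξ ⟨hξ.1.le, hξ.2.le⟩
    rwa [he, div_le_iff₀ (by linarith)] at this
  · subst h1; simp

lemma BB_lip (c : Core σ H N p S u h) {x y : ℝ} (hxy : x ≤ y) : BB σ h y - BB σ h x ≤ H * (y - x) :=
  c.BB_incr hxy fun z _ => c.g_le z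

lemma BB_mono (c : Core σ H N p S u h) : Monotone (BB σ h) := by
  apply monotone_of_deriv_nonneg (fun x => (c.BB_deriv x).differentiableAt)
  intro x
  rw [(c.BB_deriv x).deriv]; exact c.g_nonneg x

lemma BB_nonneg (c : Core σ H N p S u h) {x : ℝ} (hx : 0 ≤ x) : 0 ≤ BB σ h x := by
  have := c.BB_mono hx
  simpa [BB] using this

lemma AA_nonneg (c : Core σ H N p S u h) {x : ℝ} (hx : 0 ≤ x) : 0 ≤ AA σ h x := div_nonneg (c.BB_nonneg hx) hx

lemma AA_deriv (c : Core σ H N p S u h) {x : ℝ} (hx : 0 < x) :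
    HasDerivAt (AA σ h) ((gc σ h x - AA σ h x) / x) x := by
  have := (c.BB_deriv x).div (hasDerivAt_id x) hx.ne'
  refine HasDerivAt.congr_deriv (f := AA σ h) this ?_
  unfold AA
  simp only [id]
  field_simp

lemma u_AA (c : Core σ H N p S u h) {x : ℝ} (hx : 0 < x) :
    u x = gc σ h x / N + (1 - 1 / (N:ℝ)) * AA σ h x := c.u_eq x hx

lemma Ninv_pos (c : Core σ H N p S u h) : 0 < 1 / (N:ℝ) := by
  have : (2:ℝ) ≤ N := by exact_mod_cast c.N2
  positivity

lemma Ninv_le (c : Core σ H N p S u h) : 1 / (N:ℝ) ≤ 1 / 2 := by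
  have : (2:ℝ) ≤ N := by exact_mod_cast c.N2
  gcongr

lemma AA_le_2u (c : Core σ H N p S u h) {x : ℝ} (hx : 0 < x) : AA σ h x ≤ 2 * u x := by
  have h1 := c.u_AA hx
  have h2 := c.Ninv_le
  have h3 := c.Ninv_pos
  have h4 := c.g_nonneg x
  have h5 := c.AA_nonneg hx.le
  have h6 : 0 ≤ gc σ h x / N := by positivity
  nlinarith

lemma g_le_Nu (c : Core σ H N p S u h) {x : ℝ} (hx : 0 < x) : gc σ h x ≤ N * u x := by
  have h1 := c.u_AA hx
  have h2 := c.Ninv_le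
  have h5 := c.AA_nonneg hx.le
  have : (2:ℝ) ≤ N := by exact_mod_cast c.N2
  have h6 : gc σ h x / N ≤ u x := by
    have : 0 ≤ (1 - 1 / (N:ℝ)) * AA σ h x := mul_nonneg (by linarith) h5
    linarith
  rw [div_le_iff₀ (by linarith)] at h6
  linarith

lemma BB_lower (c : Core σ H N p S u h) : ∃ b X : ℝ, 0 < b ∧ 1 ≤ X ∧ ∀ x, X ≤ x → b ≤ BB σ h x := by
  by_cases hex : ∃ x, 1 ≤ x ∧ 0 < BB σ h x
  · obtain ⟨x, h1, h2⟩ := hex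
    exact ⟨_, x, h2, h1, fun y hy => c.BB_mono hy⟩
  · exfalso
    push Not at hex
    have h1 : ∀ x, 1 ≤ x → BB σ h x = 0 := fun x hx => le_antisymm (hex x hx) (c.BB_nonneg (by linarith))
    have hg : gc σ h 2 = 0 := by
      have hd := c.BB_deriv 2
      have : HasDerivAt (BB σ h) 0 2 := by
        apply (hasDerivAt_const (2:ℝ) (0:ℝ)).congr_of_eventuallyEq
        filter_upwards [lt_mem_nhds (show (1:ℝ) < 2 by norm_num)] with x hx
        exact h1 x hx.le
      exact hd.unique this
    have := c.u_AA (x := 2) (by norm_num)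
    rw [hg, AA, h1 2 (by norm_num)] at this
    simp at this
    linarith [c.u_pos 2]

/-- future bound -/
lemma AA_future (c : Core σ H N p S u h) {x z : ℝ} (hx : 0 < x) (hz : x ≤ z) : AA σ h x * (x / z) ≤ AA σ h z := by
  unfold AA
  have hz0 : 0 < z := by linarith
  rw [div_mul_div_comm, mul_comm x z, mul_div_mul_right _ _ hx.ne']
  exact div_le_div_of_nonneg_right (c.BB_mono hz) hz0.le

end Core

open MeasureTheory Filter Set

lemma gt_tendsto {σ : ℝ} (hσ : 0 < σ) : Tendsto (gt σ) atTop (nhds 0) := by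
  unfold gt
  have h1 : Tendsto (fun d : ℝ => -(d ^ 2) / (4 * σ ^ 2)) atTop atBot := by
    apply Tendsto.atBot_div_const (by positivity)
    exact tendsto_neg_atTop_atBot.comp (tendsto_pow_atTop (by norm_num))
  simpa using (Real.tendsto_exp_atBot.comp h1).const_mul 2

namespace Core
variable {σ H : ℝ} {N : ℕ} {p S u h : ℝ → ℝ}

lemma den_lower (c : Core σ H N p S u h) {y y' ρ R q0 : ℝ} (hρ : 0 < ρ) (hρ1 : ρ ≤ 1) (hq0 : 0 ≤ q0)
    (hu : ∀ z ∈ Icc y (y + ρ), q0 ≤ p (u z)) (hy : |y' - y| ≤ R) :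
    q0 * ρ * gq σ (R + 1) ≤ gc σ (fun z => p (u z)) y' := by
  have hσ := c.σ_pos
  have hI := gq_mul_int hσ c.pu_meas c.pu_bd y'
  have hR : 0 ≤ R := (abs_nonneg _).trans hy
  calc q0 * ρ * gq σ (R + 1) = ∫ z in Icc y (y + ρ), gq σ (R + 1) * q0 := by
        rw [setIntegral_const]
        simp [Measure.real, hρ.le]; ring
    _ ≤ ∫ z in Icc y (y + ρ), gq σ (y' - z) * p (u z) := by
        apply setIntegral_mono_on _ hI.integrableOn measurableSet_Icc
        · intro z hz
          apply mul_le_mul _ (hu z hz) hq0 (gq_pos hσ _).le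
          apply gq_anti hσ
          rw [sq_le_sq, abs_of_nonneg (by linarith : 0 ≤ R + 1)]
          rw [abs_le] at hy ⊢
          constructor <;> linarith [hz.1, hz.2]
        · exact continuous_const.integrableOn_Icc
    _ ≤ _ := by
        apply setIntegral_le_integral hI
        exact Filter.Eventually.of_forall fun z => mul_nonneg (gq_pos hσ _).le (c.p_pos _ (c.u_pos z)).le

lemma g_harnack (c : Core σ H N p S u h) {R y y' : ℝ} (hR : 0 ≤ R) (h1 : y ≤ y') (h2 : y' ≤ y + 1)
    (h3 : (y' - y) * (2 * R + 1) ≤ σ ^ 2) : (gc σ h y - H * gt σ R) / 2 ≤ gc σ h y' := by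
  have hσ := c.σ_pos
  have hI := gq_mul_int hσ c.h_meas c.h_bd y
  have hI' := gq_mul_int hσ c.h_meas c.h_bd y'
  have hH := c.H_pos
  have a1 : gc σ h y - H * gt σ R ≤ ∫ z in Icc (y - R) (y + R), gq σ (y - z) * h z := by
    unfold gc
    rw [← integral_add_compl (measurableSet_Icc (a := y - R) (b := y + R)) hI]
    have : ∫ z in (Icc (y - R) (y + R))ᶜ, gq σ (y - z) * h z ≤ H * gt σ R := by
      calc _ ≤ ∫ z in (Icc (y - R) (y + R))ᶜ, gq σ (y - z) * H := by
            apply setIntegral_mono_on hI.integrableOn ((gq_int hσ y).mul_const H).integrableOn measurableSet_Icc.compl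
            intro z hz
            exact mul_le_mul_of_nonneg_left (c.h_le z) (gq_pos hσ _).le
        _ ≤ H * gt σ R := by
            rw [integral_mul_const, mul_comm]
            exact mul_le_mul_of_nonneg_left (gq_tail hσ hR y) hH.le
    linarith
  have a2 : ∫ z in Icc (y - R) (y + R), (1 / 2) * (gq σ (y - z) * h z) ≤ ∫ z in Icc (y - R) (y + R), gq σ (y' - z) * h z := by
    apply setIntegral_mono_on (hI.const_mul _).integrableOn hI'.integrableOn measurableSet_Icc
    intro z hz
    rw [← mul_assoc]
    apply mul_le_mul_of_nonneg_right _ (c.h_nonneg z)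
    unfold gq
    rw [← mul_div_assoc]
    apply div_le_div_of_nonneg_right _ (by positivity)
    have e1 : (1:ℝ) / 2 ≤ Real.exp (-(1/2)) := by
      have := Real.add_one_le_exp (-(1/2) : ℝ); linarith
    calc 1 / 2 * Real.exp (-(y - z) ^ 2 / (2 * σ ^ 2)) ≤ Real.exp (-(1/2)) * Real.exp (-(y - z) ^ 2 / (2 * σ ^ 2)) := by gcongr
      _ = Real.exp (-(1/2) + -(y - z) ^ 2 / (2 * σ ^ 2)) := by rw [Real.exp_add]
      _ ≤ _ := by
        apply Real.exp_le_exp.2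
        rw [le_div_iff₀ (by positivity), add_mul, div_mul_cancel₀ _ (by positivity)]
        have : (y - z) ≤ R := by linarith [hz.1]
        nlinarith
  have a3 : ∫ z in Icc (y - R) (y + R), gq σ (y' - z) * h z ≤ gc σ h y' := by
    apply setIntegral_le_integral hI'
    exact Filter.Eventually.of_forall fun z => mul_nonneg (gq_pos hσ _).le (c.h_nonneg z)
  rw [integral_const_mul] at a2
  linarith

lemma visible (c : Core σ H N p S u h) {δ s k : ℝ} (hδ : 0 < δ) (hs0 : 0 ≤ s) (hk : 0 < k)
    (hs : ∀ᶠ z in atTop, S (u z) ≤ s) : ∀ᶠ y in atTop, δ ≤ u y → gc σ h y ≤ s + k := by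
  have hσ := c.σ_pos
  have hH := c.H_pos
  have hN0 := c.Ninv_pos
  have hN1 := c.Ninv_le
  have hgt := (gt_tendsto hσ).const_mul H
  rw [mul_zero] at hgt
  obtain ⟨R, hR0, hR1⟩ := ((eventually_ge_atTop (0:ℝ)).and
    (hgt.eventually (gt_mem_nhds (show 0 < min (δ / 2) (k / 2) by positivity)))).exists
  have hRδ : H * gt σ R ≤ δ / 2 := hR1.le.trans (min_le_left _ _)
  have hRk : H * gt σ R ≤ k / 2 := hR1.le.trans (min_le_right _ _)
  set ρ := min 1 (σ ^ 2 / (2 * R + 1)) with hρd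
  have hρ : 0 < ρ := by positivity
  have hρ1 : ρ ≤ 1 := min_le_left _ _
  have hρ2 : ρ * (2 * R + 1) ≤ σ ^ 2 := by
    rw [← le_div_iff₀ (by positivity)]; exact min_le_right _ _
  set D0 := p (δ / 4) * ρ * gq σ (R + 1) with hD0d
  have hD0 : 0 < D0 := mul_pos (mul_pos (c.p_pos _ (by positivity)) hρ) (gq_pos hσ _)
  have hgt2 : Tendsto (fun y => H * gt σ (y / 4) / D0) atTop (nhds 0) := by
    have := (hgt.comp (tendsto_id.atTop_div_const (show (0:ℝ) < 4 by norm_num))).div_const D0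
    simpa using this
  obtain ⟨X, hX⟩ := eventually_atTop.1 hs
  filter_upwards [hgt2.eventually (gt_mem_nhds (show 0 < k / 2 by positivity)), eventually_ge_atTop (1:ℝ),
    eventually_ge_atTop (4 * R), eventually_ge_atTop (2 * |X|)] with y hy1 hy2 hy3 hy4 huy
  have hXX := le_abs_self X
  have hy0 : 0 < y := by linarith
  -- u large near y
  have hnear : ∀ y' ∈ Icc y (y + ρ), δ / 4 ≤ u y' := by
    intro y' hy'
    have hy'0 : 0 < y' := by linarith [hy'.1]
    have e1 := c.g_harnack hR0 hy'.1 (by linarith [hy'.2]) (by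
      have : y' - y ≤ ρ := by linarith [hy'.2]
      nlinarith)
    have e2 := c.AA_future hy0 hy'.1
    have e3 : 1 / 2 ≤ y / y' := by rw [div_le_div_iff₀ (by norm_num) hy'0]; linarith [hy'.2]
    have e4 := c.AA_nonneg hy0.le
    have e5 : AA σ h y / 2 ≤ AA σ h y' := by nlinarith
    have e6 := c.u_AA hy0
    have e7 := c.u_AA hy'0
    rw [div_eq_mul_one_div] at e6 e7
    have e8 : (gc σ h y - H * gt σ R) / 2 * (1 / (N:ℝ)) ≤ gc σ h y' * (1 / (N:ℝ)) := mul_le_mul_of_nonneg_right e1 hN0.le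
    have e9 : (1 - 1 / (N:ℝ)) * (AA σ h y / 2) ≤ (1 - 1 / (N:ℝ)) * AA σ h y' := mul_le_mul_of_nonneg_left e5 (by linarith)
    have e10 : H * gt σ R * (1 / (N:ℝ)) ≤ δ / 2 := by
      have : 0 < H * gt σ R := mul_pos hH (gt_pos _ _)
      nlinarith
    nlinarith
  have hden : ∀ y' ∈ Icc (y - R) (y + R), D0 ≤ gc σ (fun z => p (u z)) y' := by
    intro y' hy'
    apply c.den_lower hρ hρ1 (c.p_pos _ (by positivity)).le
    · intro z hz
      exact c.p_mono _ _ (by positivity) (hnear z hz)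
    · rw [abs_le]; constructor <;> linarith [hy'.1, hy'.2]
  have := gc_le hσ (c := s + k / 2) (y := y) c.h_meas c.h_nonneg c.h_le hR0 (by positivity) (fun y' hy' => by
    have := c.h_upper (y := y') (d := y / 4) (s := s) (by linarith [hy'.1]) (by positivity) hD0 (hden y' hy')
      (fun z hz => hX z (by linarith [hz.1, hy'.1])) hs0
    linarith)
  linarith

lemma step0 (c : Core σ H N p S u h) {l : ℝ} (hl : 0 < l) : ∃ k, 0 < k ∧ ((∀ᶠ y in atTop, u y ≤ l + k) →
    (∀ᶠ y in atTop, u y ≤ l - k)) := by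
  have hN0 := c.Ninv_pos
  have hN1 := c.Ninv_le
  have hp0 := c.p_pos (l / 2) (by positivity)
  have hp1 := c.p_le (l / 2) (by positivity)
  refine ⟨l * p (l / 2) / 16, by positivity, fun hev => ?_⟩
  set k := l * p (l / 2) / 16 with hk
  have hk0 : 0 < k := by positivity
  have hkl : k ≤ l / 16 := by rw [hk]; nlinarith
  have hS : S (l + k) ≤ l - 7 * k := by
    have := c.S_gap (l / 2) (l + k) (by positivity) (by linarith)
    nlinarith
  have hS0 := c.S_nonneg (l + k) (by positivity)
  have hvis := c.visible (δ := l / 4) (s := S (l + k)) (k := k) (by positivity) hS0 hk0 (by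
    filter_upwards [hev] with z hz
    exact c.S_mono _ _ (c.u_pos z) hz)
  obtain ⟨X, hX⟩ := eventually_atTop.1 hvis
  have hb := barrier_event (f := fun x => BB σ h x - (l - 3 * k) * x) (f' := fun x => gc σ h x - (l - 3 * k))
    (a := max X 1) (k := k) hk0 (fun x _ => by
      have h1 : HasDerivAt (fun x => BB σ h x - (l - 3 * k) * x) (gc σ h x - (l - 3 * k) * 1) x :=
        (c.BB_deriv x).sub ((hasDerivAt_id x).const_mul (l - 3 * k))
      simpa only [mul_one] using h1) (fun x hx hfx => by
      have hx0 : 0 < x := by linarith [le_max_right X 1]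
      have hA : l - 3 * k ≤ AA σ h x := by unfold AA; rw [le_div_iff₀ hx0]; linarith
      have := c.AA_le_2u hx0
      have := hX x (le_of_max_le_left hx) (by linarith)
      linarith)
  filter_upwards [hb, hvis, eventually_gt_atTop 0] with x h1 h2 h3
  by_cases hu : l / 4 ≤ u x
  · have := h2 hu
    have hA : AA σ h x ≤ l - 3 * k := by unfold AA; rw [div_le_iff₀ h3]; linarith
    have e6 := c.u_AA h3
    rw [div_eq_mul_one_div] at e6
    have e1 : gc σ h x * (1 / (N:ℝ)) ≤ (l - 3 * k) * (1 / (N:ℝ)) := mul_le_mul_of_nonneg_right (by linarith) hN0.le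
    have e2 : (1 - 1 / (N:ℝ)) * AA σ h x ≤ (1 - 1 / (N:ℝ)) * (l - 3 * k) := mul_le_mul_of_nonneg_left hA (by linarith)
    nlinarith
  · linarith

lemma u_tendsto (c : Core σ H N p S u h) : Tendsto u atTop (nhds 0) := by
  set T : Set ℝ := {l | 0 ≤ l ∧ ∀ᶠ y in atTop, u y ≤ l} with hT
  have hne : T.Nonempty := ⟨H, c.H_pos.le, Filter.Eventually.of_forall c.u_le⟩
  have hbd : BddBelow T := ⟨0, fun l hl => hl.1⟩
  have h0 : 0 ≤ sInf T := le_csInf hne fun l hl => hl.1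
  have hz : sInf T = 0 := by
    by_contra hcon
    have hl : 0 < sInf T := lt_of_le_of_ne h0 (Ne.symm hcon)
    obtain ⟨k, hk, hst⟩ := c.step0 hl
    obtain ⟨l, hlT, hlt⟩ := exists_lt_of_csInf_lt hne (show sInf T < sInf T + k by linarith)
    have h1 := hst (hlT.2.mono fun y hy => hy.trans hlt.le)
    have h2 : sInf T - k ∈ T := by
      refine ⟨?_, h1⟩
      obtain ⟨y, hy⟩ := h1.exists
      exact (c.u_pos y).le.trans hy
    have := csInf_le hbd h2
    linarith
  rw [tendsto_order]
  refine ⟨fun a ha => Filter.Eventually.of_forall fun y => ha.trans (c.u_pos y), fun a ha => ?_⟩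
  obtain ⟨l, hlT, hlt⟩ := exists_lt_of_csInf_lt hne (show sInf T < a by linarith)
  exact hlT.2.mono fun y hy => hy.trans_lt hlt

lemma AA_tendsto (c : Core σ H N p S u h) : Tendsto (AA σ h) atTop (nhds 0) := by
  have h1 := c.u_tendsto.const_mul 2
  rw [mul_zero] at h1
  apply squeeze_zero' _ _ h1
  · filter_upwards [eventually_ge_atTop 0] with x hx
    exact c.AA_nonneg hx
  · filter_upwards [eventually_gt_atTop 0] with x hx
    exact c.AA_le_2u hx

lemma g_tendsto (c : Core σ H N p S u h) : Tendsto (gc σ h) atTop (nhds 0) := by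
  have h1 := c.u_tendsto.const_mul (N:ℝ)
  rw [mul_zero] at h1
  apply squeeze_zero' _ _ h1
  · exact Filter.Eventually.of_forall c.g_nonneg
  · filter_upwards [eventually_gt_atTop 0] with x hx
    exact c.g_le_Nu hx

end Core

open MeasureTheory Filter Set

lemma iter_lem {e : ℝ → ℝ} {x w E0 δ : ℝ} (K : ℕ) (hw : 0 ≤ w) (hE : 0 ≤ E0) (hδ : 0 ≤ δ)
    (h0 : ∀ z, |z - x| ≤ K * w → e z ≤ E0)
    (hstep : ∀ z, |z - x| ≤ K * w → ∀ Λ, 0 ≤ Λ → Λ ≤ E0 → (∀ z', |z' - z| ≤ w → e z' ≤ Λ) →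
      e z ≤ 3 / 4 * Λ + δ) : e x ≤ (3 / 4) ^ K * E0 + 4 * δ := by
  have key : ∀ j : ℕ, j ≤ K → ∀ z, |z - x| ≤ ((K:ℝ) - j) * w → e z ≤ min E0 ((3 / 4) ^ j * E0 + 4 * δ) := by
    intro j
    induction j with
    | zero =>
      intro _ z hz
      have := h0 z (by simpa using hz)
      apply le_min this
      simp; linarith
    | succ j ih =>
      intro hj z hz
      push_cast at hz
      have hjw : (0:ℝ) ≤ j * w := by positivity
      have hz' : |z - x| ≤ K * w := by nlinarith
      apply le_min (h0 z hz')
      have := hstep z hz' (min E0 ((3 / 4) ^ j * E0 + 4 * δ)) (le_min hE (by positivity)) (min_le_left _ _)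
        (fun z' hz'' => ih (by omega) z' (by
          have : |z' - x| ≤ |z' - z| + |z - x| := abs_sub_le _ _ _
          nlinarith))
      have h2 := min_le_right E0 ((3 / 4) ^ j * E0 + 4 * δ)
      rw [pow_succ]
      nlinarith
  have := (key K le_rfl x (by simp)).trans (min_le_right _ _)
  exact this

structure Reg (H : ℝ) (p S S' : ℝ → ℝ) (L : ℝ) : Prop where
  hS : ∀ v, 0 < v → v < H → HasDerivAt S (S' v) v
  hp : ∀ v, 0 < v → v < H → HasDerivAt (fun v => Real.log (p v)) (S' v / (v - S v)) v
  hlim : Tendsto S' (nhdsWithin 0 (Ioi 0)) (nhds L)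

namespace Core
variable {σ H L : ℝ} {N : ℕ} {p S u h S' : ℝ → ℝ}

lemma r_pos (c : Core σ H N p S u h) {v : ℝ} (hv : 0 < v) : 0 < v - S v := by
  have h1 := c.S_gap (v / 2) v (by positivity) (by linarith)
  have h2 := c.p_pos (v / 2) (by positivity)
  nlinarith

lemma S'_near (c : Core σ H N p S u h) (R : Reg H p S S' L) {ε : ℝ} (hε : 0 < ε) :
    ∃ v0, 0 < v0 ∧ v0 < H ∧ ∀ v, 0 < v → v ≤ v0 → L - ε ≤ S' v ∧ S' v ≤ L + ε := by
  have h1 := R.hlim.eventually (Icc_mem_nhds (show L - ε < L by linarith) (show L < L + ε by linarith))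
  rw [eventually_nhdsWithin_iff, Metric.eventually_nhds_iff] at h1
  obtain ⟨δ, hδ, hh⟩ := h1
  have := c.H_pos
  refine ⟨min (δ / 2) (H / 2), by positivity, by linarith [min_le_right (δ / 2) (H / 2)], fun v hv hv2 => ?_⟩
  exact hh (by rw [Real.dist_eq, sub_zero, abs_of_pos hv]; linarith [min_le_left (δ / 2) (H / 2)]) hv

lemma S_lip (_c : Core σ H N p S u h) (R : Reg H p S S' L) {a b v0 : ℝ} (hv0 : v0 < H)
    (hS' : ∀ v, 0 < v → v ≤ v0 → a ≤ S' v ∧ S' v ≤ b) {v w : ℝ} (hv : 0 < v) (hvw : v ≤ w) (hw : w ≤ v0) :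
    a * (w - v) ≤ S w - S v ∧ S w - S v ≤ b * (w - v) := by
  rcases hvw.lt_or_eq with h1 | h1
  · obtain ⟨ξ, hξ, he⟩ := exists_hasDerivAt_eq_slope S S' h1
      (fun x hx => (R.hS x (by linarith [hx.1]) (by linarith [hx.2])).continuousAt.continuousWithinAt)
      (fun x hx => R.hS x (by linarith [hx.1]) (by linarith [hx.2]))
    have h2 := hS' ξ (by linarith [hξ.1]) (by linarith [hξ.2])
    rw [eq_div_iff (by linarith)] at he
    constructor <;> nlinarith
  · subst h1; simp

lemma S_zero (c : Core σ H N p S u h) : Tendsto S (nhdsWithin 0 (Ioi 0)) (nhds 0) := by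
  apply tendsto_of_tendsto_of_tendsto_of_le_of_le' tendsto_const_nhds
    (tendsto_nhdsWithin_of_tendsto_nhds tendsto_id : Tendsto (fun v : ℝ => v) (nhdsWithin 0 (Ioi 0)) (nhds 0))
  · filter_upwards [self_mem_nhdsWithin] with v hv
    exact c.S_nonneg v hv
  · filter_upwards [self_mem_nhdsWithin] with v hv
    exact c.S_le hv

lemma S_lin (c : Core σ H N p S u h) (R : Reg H p S S' L) {a b v0 : ℝ} (hv0 : v0 < H)
    (hS' : ∀ v, 0 < v → v ≤ v0 → a ≤ S' v ∧ S' v ≤ b) {w : ℝ} (hw0 : 0 < w) (hw : w ≤ v0) :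
    a * w ≤ S w ∧ S w ≤ b * w := by
  have hid : Tendsto (fun v : ℝ => v) (nhdsWithin 0 (Ioi 0)) (nhds 0) := tendsto_nhdsWithin_of_tendsto_nhds tendsto_id
  have hev : ∀ᶠ v in nhdsWithin (0:ℝ) (Ioi 0), a * (w - v) ≤ S w - S v ∧ S w - S v ≤ b * (w - v) := by
    have : Ioo 0 w ∈ nhdsWithin (0:ℝ) (Ioi 0) := Ioo_mem_nhdsGT hw0
    filter_upwards [this] with v hv
    exact c.S_lip R hv0 hS' hv.1 hv.2.le hw
  have t1 : Tendsto (fun v => S w - S v) (nhdsWithin 0 (Ioi 0)) (nhds (S w - 0)) := c.S_zero.const_sub _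
  have t2 : ∀ a : ℝ, Tendsto (fun v => a * (w - v)) (nhdsWithin 0 (Ioi 0)) (nhds (a * (w - 0))) :=
    fun a => (hid.const_sub w).const_mul a
  constructor
  · have := le_of_tendsto_of_tendsto (t2 a) t1 (hev.mono fun v hv => hv.1)
    simpa using this
  · have := le_of_tendsto_of_tendsto t1 (t2 b) (hev.mono fun v hv => hv.2)
    simpa using this

lemma L_le (c : Core σ H N p S u h) (R : Reg H p S S' L) : L ≤ 1 := by
  apply le_of_forall_pos_le_add
  intro ε hε
  obtain ⟨v0, h0, h1, h2⟩ := c.S'_near R hε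
  have := (c.S_lin R h1 h2 h0 le_rfl).1
  have := c.S_le h0
  have : (L - ε) * v0 ≤ 1 * v0 := by linarith
  have := le_of_mul_le_mul_right this h0
  linarith

lemma L_nonneg (c : Core σ H N p S u h) (R : Reg H p S S' L) : 0 ≤ L := by
  apply le_of_forall_pos_le_add
  intro ε hε
  obtain ⟨v0, h0, h1, h2⟩ := c.S'_near R hε
  have := (c.S_lin R h1 h2 h0 le_rfl).2
  have := c.S_nonneg v0 h0
  have : 0 * v0 ≤ (L + ε) * v0 := by linarith
  exact le_of_mul_le_mul_right this h0

/-- 3/2-Lipschitz neighbourhood -/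
lemma S_lip32 (c : Core σ H N p S u h) (R : Reg H p S S' L) : ∃ v0, 0 < v0 ∧ v0 < H ∧
    ∀ v w, 0 < v → v ≤ w → w ≤ v0 → S w - S v ≤ 3 / 2 * (w - v) := by
  obtain ⟨v0, h0, h1, h2⟩ := c.S'_near R (show (0:ℝ) < 1 / 2 by norm_num)
  have hL := c.L_le R
  refine ⟨v0, h0, h1, fun v w hv hvw hw => ?_⟩
  have := (c.S_lip R h1 h2 hv hvw hw).2
  nlinarith

lemma fixpt (c : Core σ H N p S u h) (R : Reg H p S S' L) {α : ℝ} (hα : 0 < α) (hαH : α < H) :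
    ∃ γ, 0 ≤ γ ∧ γ ≤ α ∧ γ = S ((1 - 1 / (N:ℝ)) * α + γ / N) := by
  have hN0 := c.Ninv_pos
  have hN1 := c.Ninv_le
  have hcont : ContinuousOn (fun γ => γ - S ((1 - 1 / (N:ℝ)) * α + γ / N)) (Icc 0 α) := by
    apply continuousOn_id.sub
    intro γ hγ
    have h1 : (1 - 1 / (N:ℝ)) * α + γ / N = (1 - 1 / (N:ℝ)) * α + γ * (1 / N) := by ring
    have : HasDerivAt S _ ((1 - 1 / (N:ℝ)) * α + γ / N) := R.hS _ (by rw [h1]; nlinarith [hγ.1]) (by rw [h1]; nlinarith [hγ.2])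
    apply ContinuousAt.continuousWithinAt
    exact ContinuousAt.comp (f := fun γ => (1 - 1 / (N:ℝ)) * α + γ / N) this.continuousAt (by fun_prop)
  have := intermediate_value_Icc hα.le hcont
  have h0 : (0:ℝ) ∈ Icc (0 - S ((1 - 1 / (N:ℝ)) * α + 0 / N)) (α - S ((1 - 1 / (N:ℝ)) * α + α / N)) := by
    constructor
    · have := c.S_nonneg ((1 - 1 / (N:ℝ)) * α + 0 / N) (by rw [zero_div]; nlinarith)
      linarith
    · have e : (1 - 1 / (N:ℝ)) * α + α / N = α := by ring
      rw [e]; linarith [c.S_le hα]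
  obtain ⟨γ, hγ, he⟩ := this h0
  exact ⟨γ, hγ.1, hγ.2, by simp only at he; linarith⟩

lemma fix_cmp (c : Core σ H N p S u h) {v0 : ℝ}
    (hLip : ∀ v w, 0 < v → v ≤ w → w ≤ v0 → S w - S v ≤ 3 / 2 * (w - v)) {α1 α2 γ1 γ2 : ℝ}
    (h1 : 0 < α1) (h12 : α1 ≤ α2) (h2 : α2 ≤ v0) (g1 : 0 ≤ γ1) (g2 : 0 ≤ γ2) (g2' : γ2 ≤ α2)
    (e1 : γ1 = S ((1 - 1 / (N:ℝ)) * α1 + γ1 / N))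
    (e2 : γ2 = S ((1 - 1 / (N:ℝ)) * α2 + γ2 / N)) : γ2 - γ1 ≤ 6 * (α2 - α1) := by
  have hN0 := c.Ninv_pos
  have hN1 := c.Ninv_le
  set t := 1 / (N:ℝ) with ht
  rw [div_eq_mul_one_div, ← ht] at e1 e2
  have p1 : 0 < (1 - t) * α1 + γ1 * t := by nlinarith [mul_nonneg g1 hN0.le, mul_pos h1 (show 0 < 1 - t by linarith)]
  have p2 : 0 < (1 - t) * α2 + γ2 * t := by nlinarith [mul_nonneg g2 hN0.le, mul_pos (h1.trans_le h12) (show 0 < 1 - t by linarith)]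
  rcases le_total ((1 - t) * α1 + γ1 * t) ((1 - t) * α2 + γ2 * t) with hle | hle
  · have := hLip _ _ p1 hle (by nlinarith)
    rw [← e1, ← e2] at this
    by_contra hcon
    push Not at hcon
    nlinarith
  · have := c.S_mono _ _ p2 hle
    rw [← e1, ← e2] at this
    linarith

lemma osc_lower (c : Core σ H N p S u h) {v0 : ℝ}
    (hLip : ∀ v w, 0 < v → v ≤ w → w ≤ v0 → S w - S v ≤ 3 / 2 * (w - v)) {α γ x d : ℝ} (K : ℕ)
    (hα : 0 < α) (hαv : α ≤ v0) (g0 : 0 ≤ γ) (g1 : γ ≤ α) (ge : γ = S ((1 - 1 / (N:ℝ)) * α + γ / N))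
    (hd : 0 ≤ d) (hgt : gt σ d ≤ 1 / 2) (hD : (K + 1) * (2 * d) < x)
    (hA : ∀ z, |z - x| ≤ (K + 1) * (2 * d) → α ≤ AA σ h z) :
    γ - α * ((3 / 4) ^ K + 12 * gt σ d) ≤ gc σ h x := by
  have hN0 := c.Ninv_pos
  have hN1 := c.Ninv_le
  have hgt0 := gt_pos σ d
  have hit := iter_lem (e := fun z => γ - gc σ h z) (x := x) (w := 2 * d) (E0 := γ) (δ := 3 * gt σ d * α) K
    (by positivity) g0 (by positivity) (fun z _ => by linarith [c.g_nonneg z]) (by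
    intro z hz Λ hΛ hΛγ hz'
    set t := 1 / (N:ℝ) with ht
    have hzx := abs_le.1 hz
    have hv : 0 < (1 - t) * α + t * (γ - Λ) := by nlinarith [mul_nonneg hN0.le (sub_nonneg.2 hΛγ), mul_pos hα (show 0 < 1 - t by linarith)]
    have h1 := c.g_lower (y := z) (d := d) (v := (1 - t) * α + t * (γ - Λ)) (by nlinarith) hd hgt hv (by
      intro z' hz''
      have hz3 : |z' - z| ≤ 2 * d := by rw [abs_le]; constructor <;> linarith [hz''.1, hz''.2]
      have hz4 : |z' - x| ≤ (K + 1) * (2 * d) := by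
        have := abs_sub_le z' z x
        linarith
      have := abs_le.1 hz4
      have a1 := hA z' hz4
      have a2 := hz' z' hz3
      rw [c.u_AA (show 0 < z' by linarith), div_eq_mul_one_div, ← ht]
      nlinarith)
    have h2 := hLip ((1 - t) * α + t * (γ - Λ)) ((1 - t) * α + γ / N) hv (by rw [div_eq_mul_one_div, ← ht]; nlinarith)
      (by rw [div_eq_mul_one_div, ← ht]; nlinarith)
    rw [← ge, div_eq_mul_one_div γ, ← ht] at h2
    have h3 := c.S_le hv
    have h4 : gt σ d * S ((1 - t) * α + t * (γ - Λ)) ≤ gt σ d * α := by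
      apply mul_le_mul_of_nonneg_left _ hgt0.le
      nlinarith
    nlinarith)
  have : (3 / 4 : ℝ) ^ K * γ ≤ (3 / 4) ^ K * α := by gcongr
  linarith

lemma osc_upper (c : Core σ H N p S u h) {v0 : ℝ}
    (hLip : ∀ v w, 0 < v → v ≤ w → w ≤ v0 → S w - S v ≤ 3 / 2 * (w - v)) {α γ x d D0 E0 : ℝ} (K : ℕ)
    (hα : 0 < α) (hE : 0 ≤ E0) (hαv : α + E0 ≤ v0) (g0 : 0 ≤ γ) (g1 : γ ≤ α)
    (ge : γ = S ((1 - 1 / (N:ℝ)) * α + γ / N))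
    (hd : 0 ≤ d) (hD : (K + 1) * (2 * d) < x) (hD0 : 0 < D0)
    (hA : ∀ z, |z - x| ≤ (K + 1) * (2 * d) → AA σ h z ≤ α)
    (hg : ∀ z, |z - x| ≤ (K + 1) * (2 * d) → gc σ h z ≤ E0)
    (hden : ∀ z, |z - x| ≤ (K + 1) * (2 * d) → D0 ≤ gc σ (fun z => p (u z)) z) :
    gc σ h x ≤ γ + (3 / 4) ^ K * E0 + 4 * (H * gt σ d / D0 + H * gt σ d) := by
  have hN0 := c.Ninv_pos
  have hN1 := c.Ninv_le
  have hgt0 := gt_pos σ d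
  have hH := c.H_pos
  have hit := iter_lem (e := fun z => gc σ h z - γ) (x := x) (w := 2 * d) (E0 := E0) (δ := H * gt σ d / D0 + H * gt σ d) K
    (by positivity) hE (by positivity) (fun z hz => by linarith [hg z (by nlinarith)]) (by
    intro z hz Λ hΛ hΛγ hz'
    set t := 1 / (N:ℝ) with ht
    have hzx := abs_le.1 hz
    have hU : 0 < (1 - t) * α + γ / N := by
      rw [div_eq_mul_one_div, ← ht]
      nlinarith [mul_nonneg g0 hN0.le, mul_pos hα (show 0 < 1 - t by linarith)]
    have hUv : (1 - t) * α + γ / N ≤ (1 - t) * α + t * (γ + Λ) := by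
      rw [div_eq_mul_one_div, ← ht]; nlinarith
    have h1 := c.g_upper (y := z) (d := d) (v := (1 - t) * α + t * (γ + Λ)) (D0 := D0) (by nlinarith) hd hD0 (by
      intro z' hz''
      apply hden
      have hz3 : |z' - z| ≤ d := by rw [abs_le]; constructor <;> linarith [hz''.1, hz''.2]
      have := abs_sub_le z' z x
      linarith) (by linarith) (by
      intro z' hz''
      have hz3 : |z' - z| ≤ 2 * d := by rw [abs_le]; constructor <;> linarith [hz''.1, hz''.2]
      have hz4 : |z' - x| ≤ (K + 1) * (2 * d) := by
        have := abs_sub_le z' z x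
        linarith
      have := abs_le.1 hz4
      have a1 := hA z' hz4
      have a2 := hz' z' hz3
      rw [c.u_AA (show 0 < z' by linarith), div_eq_mul_one_div, ← ht]
      nlinarith)
    have h2 := hLip ((1 - t) * α + γ / N) ((1 - t) * α + t * (γ + Λ)) hU hUv (by nlinarith)
    rw [← ge, div_eq_mul_one_div γ, ← ht] at h2
    nlinarith)
  linarith

end Core

open MeasureTheory Filter Set

lemma mvt_le {f f' : ℝ → ℝ} {a b C : ℝ} (hab : a ≤ b) (hf : ∀ x ∈ Icc a b, HasDerivAt f (f' x) x)
    (hC : ∀ x ∈ Icc a b, f' x ≤ C) : f b - f a ≤ C * (b - a) := by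
  rcases hab.lt_or_eq with h1 | h1
  · obtain ⟨ξ, hξ, he⟩ := exists_hasDerivAt_eq_slope f f' h1
      (fun x hx => (hf x hx).continuousAt.continuousWithinAt) (fun x hx => hf x ⟨hx.1.le, hx.2.le⟩)
    have h2 := hC ξ ⟨hξ.1.le, hξ.2.le⟩
    rw [eq_div_iff (by linarith)] at he
    nlinarith
  · subst h1; simp

noncomputable def sx (x : ℝ) : ℝ := x ^ (1 / 8 : ℝ)
noncomputable def Kx (x : ℝ) : ℕ := ⌊sx x⌋₊

lemma sx_tendsto : Tendsto sx atTop atTop := tendsto_rpow_atTop (by norm_num)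

lemma sx_pow {x : ℝ} (hx : 0 ≤ x) : (sx x) ^ 8 = x := by
  unfold sx
  rw [← Real.rpow_natCast, ← Real.rpow_mul hx]; norm_num

lemma Kx_le {x : ℝ} (hx : 0 ≤ sx x) : (Kx x : ℝ) ≤ sx x := Nat.floor_le hx

lemma gt_small {σ : ℝ} (hσ : 0 < σ) (k : ℕ) : ∀ᶠ x in atTop, gt σ (sx x) ≤ 1 / x ^ k := by
  have h1 := (Real.tendsto_pow_mul_exp_neg_atTop_nhds_zero (8 * k)).comp sx_tendsto
  filter_upwards [h1.eventually (gt_mem_nhds (show (0:ℝ) < 1 / 2 by norm_num)), sx_tendsto.eventually_ge_atTop (4 * σ ^ 2),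
    eventually_gt_atTop 0] with x h2 h3 h4
  simp only [Function.comp, pow_mul, sx_pow h4.le] at h2
  rw [le_div_iff₀ (by positivity)]
  have h5 : gt σ (sx x) ≤ 2 * Real.exp (- sx x) := by
    unfold gt
    gcongr
    rw [neg_div, neg_le_neg_iff, le_div_iff₀ (by positivity)]
    have : 0 < 4 * σ ^ 2 := by positivity
    nlinarith
  have : 0 < x ^ k := by positivity
  nlinarith

lemma K_small (k : ℕ) : ∀ᶠ x in atTop, (3 / 4 : ℝ) ^ (Kx x) ≤ 1 / x ^ k := by
  have h1 := (tendsto_pow_const_mul_const_pow_of_abs_lt_one (8 * k) (r := 3 / 4) (by rw [abs_of_pos] <;> norm_num)).comp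
    (tendsto_nat_floor_atTop.comp sx_tendsto)
  filter_upwards [h1.eventually (gt_mem_nhds (show (0:ℝ) < 1 / 2 ^ (8 * k) by positivity)), sx_tendsto.eventually_ge_atTop 1,
    eventually_gt_atTop 0] with x h2 h3 h4
  simp only [Function.comp] at h2
  change (Kx x : ℝ) ^ (8 * k) * (3 / 4) ^ (Kx x) < _ at h2
  have hK1 : 1 ≤ Kx x := Nat.one_le_floor_iff _ |>.2 h3
  have hK1' : (1:ℝ) ≤ Kx x := by exact_mod_cast hK1
  have hK : sx x ≤ 2 * Kx x := by
    have := Nat.lt_floor_add_one (sx x)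
    change sx x < (Kx x : ℝ) + 1 at this
    linarith
  rw [le_div_iff₀ (by positivity)]
  have h5 : x ^ k ≤ 2 ^ (8 * k) * (Kx x : ℝ) ^ (8 * k) := by
    rw [← mul_pow]
    calc x ^ k = sx x ^ (8 * k) := by rw [pow_mul, sx_pow h4.le]
      _ ≤ _ := by gcongr
  rw [lt_div_iff₀ (by positivity)] at h2
  have h6 : (0:ℝ) < (3 / 4) ^ (Kx x) := by positivity
  nlinarith

lemma win_le {x : ℝ} (hs : 1 ≤ sx x) : (Kx x + 1) * (2 * sx x) ≤ 4 * sx x ^ 2 := by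
  have := Kx_le (x := x) (by linarith)
  nlinarith

namespace Core
variable {σ H L : ℝ} {N : ℕ} {p S u h S' : ℝ → ℝ}

lemma fix_ge (c : Core σ H N p S u h) {v0 : ℝ}
    (hLip : ∀ v w, 0 < v → v ≤ w → w ≤ v0 → S w - S v ≤ 3 / 2 * (w - v)) {α γ : ℝ}
    (hα : 0 < α) (hαv : α ≤ v0) (g0 : 0 ≤ γ) (g1 : γ ≤ α) (ge : γ = S ((1 - 1 / (N:ℝ)) * α + γ / N)) :
    α - 4 * (α - S α) ≤ γ := by
  have hN0 := c.Ninv_pos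
  have hN1 := c.Ninv_le
  set t := 1 / (N:ℝ) with ht
  rw [div_eq_mul_one_div, ← ht] at ge
  have p1 : 0 < (1 - t) * α + γ * t := by nlinarith [mul_nonneg g0 hN0.le, mul_pos hα (show 0 < 1 - t by linarith)]
  have := hLip _ _ p1 (by nlinarith) hαv
  rw [← ge] at this
  nlinarith

lemma AA_pos_ev (c : Core σ H N p S u h) : ∃ X, 1 ≤ X ∧ ∀ x, X ≤ x → 0 < AA σ h x := by
  obtain ⟨b, X, hb, hX, hh⟩ := c.BB_lower
  exact ⟨X, hX, fun x hx => div_pos (hb.trans_le (hh x hx)) (by linarith)⟩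

lemma lowcore (c : Core σ H N p S u h) (R : Reg H p S S' L) {v0 : ℝ} (hv0 : v0 < H)
    (hLip : ∀ v w, 0 < v → v ≤ w → w ≤ v0 → S w - S v ≤ 3 / 2 * (w - v)) :
    ∀ᶠ x in atTop, ∀ v, 0 < v → v ≤ v0 → (∀ z ∈ Icc (x / 2) x, v ≤ AA σ h z) →
      v - 4 * (v - S v) - v * (1 / sx x ^ 2) ≤ gc σ h x := by
  filter_upwards [gt_small c.σ_pos 1, K_small 1, sx_tendsto.eventually_ge_atTop 10] with x hg hK hs v hv hvv hA
  have hx0 : 0 < x := by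
    by_contra hcon
    have h1 := gt_pos σ (sx x)
    have : 1 / x ^ 1 ≤ 0 := by rw [pow_one]; exact one_div_nonpos.2 (by linarith)
    linarith
  have hs8 := sx_pow hx0.le
  set s := sx x with hsd
  have hD1 := win_le (x := x) (by linarith)
  rw [← hsd] at hD1
  have hxs : 40 * s ^ 2 ≤ x := by
    rw [← hs8]
    have : (10:ℝ) ^ 6 ≤ s ^ 6 := by gcongr
    nlinarith [sq_nonneg s]
  have hs2 : 100 ≤ s ^ 2 := by nlinarith
  set η := 4 * s ^ 2 / x with hη
  have hη0 : 0 < η := by positivity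
  have hη1 : η ≤ 1 / 10 := by rw [hη, div_le_iff₀ hx0]; linarith
  have hxinv : 1 / x ^ 1 ≤ η / 400 := by
    rw [pow_one, hη, div_div, div_le_div_iff₀ hx0 (by positivity)]; nlinarith
  set α := v * (1 - η) with hα
  have hα0 : 0 < α := mul_pos hv (by linarith)
  have hαv : α ≤ v := by nlinarith
  obtain ⟨γ, g0, g1, ge⟩ := c.fixpt R hα0 (by linarith)
  have hdf := c.fix_ge hLip hα0 (by linarith) g0 g1 ge
  have hosc := c.osc_lower hLip (x := x) (d := s) (Kx x) hα0 (by linarith) g0 g1 ge (by linarith) (by linarith) (by linarith)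
    (fun z hz => by
      have hz' := abs_le.1 (hz.trans hD1)
      rcases le_total z x with h1 | h1
      · exact hαv.trans (hA z ⟨by linarith, h1⟩)
      · have h2 := c.AA_future hx0 h1
        have h3 := hA x ⟨by linarith, le_rfl⟩
        have hz0 : 0 < z := by linarith
        have h4 : 1 - η ≤ x / z := by
          rw [hη, le_div_iff₀ hz0]
          have : 4 * s ^ 2 / x * x = 4 * s ^ 2 := div_mul_cancel₀ _ hx0.ne'
          have h5 : 0 < 4 * s ^ 2 / x := by positivity
          nlinarith
        calc α = v * (1 - η) := rfl
          _ ≤ AA σ h x * (x / z) := mul_le_mul h3 h4 (by linarith) (by linarith)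
          _ ≤ _ := h2)
  have hl := hLip α v hα0 hαv hvv
  have h6 : α * ((3 / 4) ^ Kx x + 12 * gt σ s) ≤ v * η := by
    have : (3 / 4) ^ Kx x + 12 * gt σ s ≤ η := by linarith
    have h0 : 0 < (3 / 4 : ℝ) ^ Kx x + 12 * gt σ s := by have := gt_pos σ s; positivity
    exact mul_le_mul hαv this h0.le hv.le
  have h7 : 4 * η ≤ 1 / s ^ 2 := by
    rw [hη, ← mul_div_assoc, div_le_div_iff₀ hx0 (by positivity), ← hs8]
    have : (10:ℝ) ^ 4 ≤ s ^ 4 := by gcongr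
    have h8 : 0 < s ^ 4 := by positivity
    nlinarith
  have h8 : v * (4 * η) ≤ v * (1 / s ^ 2) := mul_le_mul_of_nonneg_left h7 hv.le
  have h9 : v - α = v * η := by rw [hα]; ring
  nlinarith

end Core

open MeasureTheory Filter Set

lemma log_sx {x : ℝ} (hx : 0 < x) : Real.log (sx x) = Real.log x / 8 := by
  unfold sx; rw [Real.log_rpow hx]; ring

lemma sx_pos {x : ℝ} (hx : 0 < x) : 0 < sx x := Real.rpow_pos_of_pos hx _

lemma kap_eq {x : ℝ} (hx : 0 < x) : 1 / sx x ^ 2 = x ^ (-(1 / 4) : ℝ) := by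
  unfold sx
  rw [← Real.rpow_natCast, ← Real.rpow_mul hx.le, one_div, ← Real.rpow_neg hx.le]
  norm_num

namespace Core
variable {σ H L : ℝ} {N : ℕ} {p S u h S' : ℝ → ℝ}

lemma startup (c : Core σ H N p S u h) (R : Reg H p S S' L) {v0 : ℝ} (hv00 : 0 < v0) (hv0 : v0 < H)
    (hLip : ∀ v w, 0 < v → v ≤ w → w ≤ v0 → S w - S v ≤ 3 / 2 * (w - v)) (X : ℝ) :
    ∃ x1, X ≤ x1 ∧ (∀ y ∈ Icc (x1 / 2) x1, AA σ h x1 ≤ AA σ h y) ∧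
      AA σ h x1 * (1 / sx x1 ^ 2) ≤ AA σ h x1 - S (AA σ h x1) := by
  by_contra hcon
  push Not at hcon
  obtain ⟨X1, hX1, hpos⟩ := c.AA_pos_ev
  obtain ⟨X2, hX2⟩ := eventually_atTop.1 (c.lowcore R hv0 hLip)
  obtain ⟨X3, hX3⟩ := eventually_atTop.1 (c.AA_tendsto.eventually (gt_mem_nhds hv00))
  set X0 := max (max X X1) (max X2 X3) with hX0
  have l1 : X ≤ X0 := (le_max_left _ _).trans (le_max_left _ _)
  have l2 : X1 ≤ X0 := (le_max_right _ _).trans (le_max_left _ _)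
  have l3 : X2 ≤ X0 := (le_max_left _ _).trans (le_max_right _ _)
  have l4 : X3 ≤ X0 := (le_max_right _ _).trans (le_max_right _ _)
  have hX01 : 1 ≤ X0 := hX1.trans l2
  obtain ⟨ym, hym, hmin⟩ := (isCompact_Icc (a := X0) (b := 2 * X0)).exists_isMinOn ⟨X0, by constructor <;> linarith⟩
    (f := AA σ h) (fun x hx => (c.AA_deriv (show 0 < x by linarith [hx.1])).continuousAt.continuousWithinAt)
  set μ := AA σ h ym with hμ
  have hμ0 : 0 < μ := hpos _ (l2.trans hym.1)
  set k := μ * Real.exp (-24) / 2 with hk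
  have hk0 : 0 < k := by positivity
  set b : ℝ → ℝ := fun x => k * Real.exp (24 * x ^ (-(1 / 4) : ℝ)) with hb
  have hbanti : ∀ x y, 0 < x → x ≤ y → b y ≤ b x := by
    intro x y hx hxy
    simp only [hb]
    gcongr k * Real.exp (24 * ?_)
    exact Real.rpow_le_rpow_of_nonpos hx hxy (by norm_num)
  have hb1 : ∀ x, X0 ≤ x → x ≤ 2 * X0 → b x < AA σ h x := by
    intro x h1 h2
    have h3 := hbanti 1 x one_pos (by linarith)
    have h4 : b 1 = μ / 2 := by
      simp only [hb, hk, Real.one_rpow, mul_one]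
      rw [div_mul_eq_mul_div, mul_assoc, ← Real.exp_add]; norm_num
    have h5 : μ ≤ AA σ h x := hmin ⟨h1, h2⟩
    linarith
  have hbar := barrier (f := fun x => AA σ h x - b x)
    (f' := fun x => (gc σ h x - AA σ h x) / x - k * (Real.exp (24 * x ^ (-(1 / 4) : ℝ)) * (24 * (-(1 / 4) * x ^ (-(1 / 4) - 1 : ℝ)))))
    (a := 2 * X0) (fun x hx => by
      have hx0 : 0 < x := by linarith
      apply (c.AA_deriv hx0).sub
      exact (((Real.hasDerivAt_rpow_const (Or.inl hx0.ne')).const_mul 24).exp).const_mul k)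
    (by have := hb1 (2 * X0) (by linarith) le_rfl; linarith)
    (fun x hx hfx hy => by
      have hx0 : 0 < x := by linarith
      have hAb : AA σ h x = b x := by linarith
      have hrec : ∀ y ∈ Icc (x / 2) x, AA σ h x ≤ AA σ h y := by
        intro y hyy
        rcases hyy.2.lt_or_eq with h1 | h1
        · have h2 : b y ≤ AA σ h y := by
            rcases le_total y (2 * X0) with h3 | h3
            · exact (hb1 y (by linarith [hyy.1]) h3).le
            · linarith [hy y h3 h1]
          have := hbanti y x (by linarith [hyy.1]) h1.le
          linarith
        · rw [h1]
      have hA0 : 0 < AA σ h x := hpos _ (by linarith)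
      have h3 := hcon x (by linarith) hrec
      have h4 := hX2 x (by linarith) (AA σ h x) hA0 (hX3 x (by linarith)).le hrec
      rw [kap_eq hx0] at h3 h4
      have h5 : x ^ (-(1 / 4) - 1 : ℝ) = x ^ (-(1/4) : ℝ) / x := Real.rpow_sub_one hx0.ne' _
      have h6 : (gc σ h x - AA σ h x) / x - k * (Real.exp (24 * x ^ (-(1 / 4) : ℝ)) * (24 * (-(1 / 4) * x ^ (-(1 / 4) - 1 : ℝ))))
        = (gc σ h x - AA σ h x + 6 * (AA σ h x * x ^ (-(1 / 4) : ℝ))) / x := by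
        rw [h5, hAb]; simp only [hb]; field_simp; ring
      rw [h6]
      apply div_pos _ hx0
      have h7 : 0 < AA σ h x * x ^ (-(1 / 4) : ℝ) := by positivity
      linarith)
  have hlow : ∀ᶠ x in atTop, k ≤ AA σ h x := by
    filter_upwards [eventually_ge_atTop (2 * X0)] with x hx
    have h1 := hbar x hx
    have h2 : k ≤ b x := by
      simp only [hb]
      have : 0 ≤ 24 * x ^ (-(1 / 4) : ℝ) := by
        have := Real.rpow_nonneg (show 0 ≤ x by linarith) (-(1/4)); linarith
      nlinarith [Real.one_le_exp this]
    linarith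
  have := ge_of_tendsto c.AA_tendsto hlow
  linarith

lemma logr_anti (c : Core σ H N p S u h) (R : Reg H p S S' L) {v0 : ℝ} (hv0 : v0 < H)
    (hS' : ∀ v, 0 < v → v ≤ v0 → 99 / 100 ≤ S' v) {v w : ℝ} (hv : 0 < v) (hvw : v ≤ w) (hw : w ≤ v0) :
    Real.log (w - S w) - 1 / 60 * Real.log (p w) ≤ Real.log (v - S v) - 1 / 60 * Real.log (p v) := by
  have := mvt_le (f := fun v => Real.log (v - S v) - 1 / 60 * Real.log (p v))
    (f' := fun v => (1 - S' v) / (v - S v) - 1 / 60 * (S' v / (v - S v))) (C := 0) hvw (fun x hx => by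
      have hx0 : 0 < x := by linarith [hx.1]
      have hxH : x < H := by linarith [hx.2]
      exact (((hasDerivAt_id x).sub (R.hS x hx0 hxH)).log (c.r_pos hx0).ne').sub ((R.hp x hx0 hxH).const_mul _))
    (fun x hx => by
      have hx0 : 0 < x := by linarith [hx.1]
      have h1 := hS' x hx0 (by linarith [hx.2])
      have h2 := c.r_pos hx0
      rw [← mul_div_assoc, ← sub_div]
      apply div_nonpos_of_nonpos_of_nonneg _ h2.le
      linarith)
  linarith

lemma poly_one (c : Core σ H N p S u h) (R : Reg H p S S' 1) :
    ∃ k : ℕ, ∀ᶠ x in atTop, 1 / x ^ k ≤ p (u x) := by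
  obtain ⟨v0, hv00, hv0, hS'⟩ := c.S'_near R (show (0:ℝ) < 1 / 100 by norm_num)
  have hSl := fun v (h1 : 0 < v) (h2 : v ≤ v0) => show (99:ℝ) / 100 ≤ S' v by linarith [(hS' v h1 h2).1]
  have hLip : ∀ v w, 0 < v → v ≤ w → w ≤ v0 → S w - S v ≤ 3 / 2 * (w - v) := by
    intro v w h1 h2 h3
    have := (c.S_lip R hv0 hS' h1 h2 h3).2
    nlinarith
  obtain ⟨X1, hX1, hpos⟩ := c.AA_pos_ev
  obtain ⟨X2, hX2⟩ := eventually_atTop.1 (c.lowcore R hv0 hLip)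
  obtain ⟨X3, hX3⟩ := eventually_atTop.1 (c.AA_tendsto.eventually (gt_mem_nhds hv00))
  obtain ⟨x1, hx1, hrec, hr1⟩ := c.startup R hv00 hv0 hLip (max X1 (max X2 X3))
  have l2 : X1 ≤ x1 := (le_max_left _ _).trans hx1
  have l3 : X2 ≤ x1 := ((le_max_left _ _).trans (le_max_right _ _)).trans hx1
  have l4 : X3 ≤ x1 := ((le_max_right _ _).trans (le_max_right _ _)).trans hx1
  have hx10 : 0 < x1 := by linarith
  have hA1 := hpos x1 l2
  have hA1v := hX3 x1 l4
  have hlogr1 : Real.log (AA σ h x1) - Real.log x1 / 4 ≤ Real.log (AA σ h x1 - S (AA σ h x1)) := by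
    have hs := sx_pos hx10
    have h1 := Real.log_le_log (by positivity) hr1
    rw [Real.log_mul hA1.ne' (by positivity), one_div, Real.log_inv, Real.log_pow, log_sx hx10] at h1
    push_cast at h1
    linarith
  -- lower bound for r
  have hrlow : ∀ v x, 0 < v → v ≤ AA σ h x1 → x1 ≤ x →
      Real.log (p (AA σ h x1)) - 15 * (Real.log x - Real.log x1) - 1 ≤ Real.log (p v) →
      v * (1 / sx x ^ 2) ≤ 3 * (v - S v) := by
    intro v x hv hv1 hx hp
    have hx0 : 0 < x := by linarith
    have h1 := c.logr_anti R hv0 hSl hv hv1 hA1v.le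
    have h2 := Real.log_le_log hv hv1
    have hs := sx_pos hx0
    have hr := c.r_pos hv
    have h3 : Real.log (v * (1 / sx x ^ 2)) ≤ Real.log (3 * (v - S v)) := by
      rw [Real.log_mul hv.ne' (by positivity), one_div, Real.log_inv, Real.log_pow, log_sx hx0, Real.log_mul (by norm_num) hr.ne']
      have h4 : 1 / 60 ≤ Real.log 3 := by
        have := Real.log_two_gt_d9
        have := Real.log_le_log (show (0:ℝ) < 2 by norm_num) (show (2:ℝ) ≤ 3 by norm_num)
        linarith
      have h5 := Real.log_le_log hx10 hx
      push_cast
      linarith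
    exact (Real.log_le_log_iff (by positivity) (by positivity)).1 h3
  have hbar := barrier (f := fun x => Real.log (p (AA σ h x)) - Real.log (p (AA σ h x1)) + 15 * (Real.log x - Real.log x1) + 1)
    (f' := fun x => S' (AA σ h x) / (AA σ h x - S (AA σ h x)) * ((gc σ h x - AA σ h x) / x) + 15 * x⁻¹)
    (a := x1) (fun x hx => by
      have hx0 : 0 < x := by linarith
      have hA := hpos x (by linarith)
      have d1 := (R.hp (AA σ h x) hA ((hX3 x (by linarith)).trans hv0)).comp x (c.AA_deriv hx0)
      exact ((d1.sub_const _).add (((Real.hasDerivAt_log hx0.ne').sub_const _).const_mul 15)).add_const _)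
    (by simp)
    (fun x hx hfx hy => by
      have hx0 : 0 < x := by linarith
      have hA := hpos x (by linarith)
      have hAv := hX3 x (by linarith)
      have hlt := Real.log_lt_log hx10 hx
      have hlt1 : ∀ w, 0 < w → Real.log (p (AA σ h x)) < Real.log (p w) → AA σ h x ≤ w := by
        intro w hw hlog
        by_contra hcc
        push Not at hcc
        have := Real.log_le_log (c.p_pos w hw) (c.p_mono w _ hw hcc.le)
        linarith
      have hA1x : AA σ h x ≤ AA σ h x1 := hlt1 _ hA1 (by linarith)
      have hrecx : ∀ y ∈ Icc (x / 2) x, AA σ h x ≤ AA σ h y := by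
        intro y hyy
        rcases hyy.2.lt_or_eq with h1 | h1
        · rcases lt_or_ge y x1 with h3 | h3
          · exact hA1x.trans (hrec y ⟨by linarith [hyy.1], h3.le⟩)
          · have h4 := hy y h3 h1
            have h5 := Real.log_lt_log (by linarith) h1
            exact hlt1 _ (hpos y (by linarith)) (by linarith)
        · rw [h1]
      have h3 := hrlow (AA σ h x) x hA hA1x hx.le (by linarith)
      have h4 := hX2 x (by linarith) (AA σ h x) hA hAv.le hrecx
      have hr := c.r_pos hA
      have h5 : -7 * (AA σ h x - S (AA σ h x)) ≤ gc σ h x - AA σ h x := by linarith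
      have h6 := hS' _ hA hAv.le
      have h7 : S' (AA σ h x) / (AA σ h x - S (AA σ h x)) * ((gc σ h x - AA σ h x) / x) + 15 * x⁻¹
        = (S' (AA σ h x) * ((gc σ h x - AA σ h x) / (AA σ h x - S (AA σ h x))) + 15) / x := by
        field_simp
      rw [h7]
      apply div_pos _ hx0
      have h8 : -7 ≤ (gc σ h x - AA σ h x) / (AA σ h x - S (AA σ h x)) := by
        rw [le_div_iff₀ hr]; exact h5
      nlinarith)
  -- final
  refine ⟨16, ?_⟩
  filter_upwards [eventually_ge_atTop (2 * x1), Real.tendsto_log_atTop.eventually_ge_atTop (29 - Real.log (p (AA σ h x1)) - 15 * Real.log x1 ),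
    (tendsto_id.atTop_div_const (show (0:ℝ) < 2 by norm_num)).eventually (eventually_forall_ge_atTop.2
      (c.AA_tendsto.eventually (gt_mem_nhds hA1)))] with x hx hlog hAsm
  have hx0 : 0 < x := by linarith
  obtain ⟨y, hy, hmin⟩ := (isCompact_Icc (a := x / 2) (b := x)).exists_isMinOn ⟨x, by constructor <;> linarith⟩
    (f := AA σ h) (fun x hx => (c.AA_deriv (show 0 < x by linarith [hx.1])).continuousAt.continuousWithinAt)
  set v := AA σ h y with hv
  have hmin' : ∀ z ∈ Icc (x / 2) x, v ≤ AA σ h z := fun z hz => hmin hz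
  have hv0' : 0 < v := hpos _ (by linarith [hy.1])
  have hv1 : v ≤ AA σ h x1 := (hAsm y hy.1).le
  have hpv := hbar y (by linarith [hy.1])
  have hlogyx := Real.log_le_log (show 0 < y by linarith [hy.1]) hy.2
  have hpv' : Real.log (p (AA σ h x1)) - 15 * (Real.log x - Real.log x1) - 1 ≤ Real.log (p v) := by linarith
  have hrl := hrlow v x hv0' hv1 (by linarith) hpv'
  have hlc := hX2 x (by linarith) v hv0' (by linarith) hmin'
  have hr := c.r_pos hv0'
  have hr' := (c.S_lin R hv0 hS' hv0' (by linarith)).1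
  set r := v - S v with hrd
  have hu : v - 7 * r ≤ u x := by
    have hN0 := c.Ninv_pos
    have hN1 := c.Ninv_le
    have h1 := hmin' x ⟨by linarith, le_rfl⟩
    rw [c.u_AA hx0, div_eq_mul_one_div]
    nlinarith
  have hv'0 : 0 < v - 7 * r := by linarith
  have hmv := mvt_le (f := fun v => Real.log (p v)) (f' := fun v => S' v / (v - S v)) (a := v - 7 * r) (b := v)
    (C := 4 / r) (by linarith) (fun w hw => R.hp w (by linarith [hw.1]) (by linarith [hw.2]))
    (fun w hw => by
      have hw0 : 0 < w := by linarith [hw.1]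
      have h1 := (c.S_lip R hv0 hS' hw0 hw.2 (by linarith)).1
      have h2 : r / 2 ≤ w - S w := by linarith [hw.1]
      have h3 := (hS' w hw0 (by linarith [hw.2])).2
      rw [div_le_div_iff₀ (by linarith) hr]
      nlinarith)
  have hm2 : 4 / r * (v - (v - 7 * r)) = 28 := by field_simp; ring
  rw [hm2] at hmv
  have hpu := Real.log_le_log (c.p_pos _ hv'0) (c.p_mono _ _ hv'0 hu)
  have : Real.log (1 / x ^ 16) ≤ Real.log (p (u x)) := by
    rw [one_div, Real.log_inv, Real.log_pow]
    push_cast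
    linarith
  exact (Real.log_le_log_iff (by positivity) (c.p_pos _ (c.u_pos x))).1 this

lemma poly_lt (c : Core σ H N p S u h) (R : Reg H p S S' L) (hL : L < 1) :
    ∃ k : ℕ, ∀ᶠ x in atTop, 1 / x ^ k ≤ p (u x) := by
  have hL0 := c.L_nonneg R
  obtain ⟨v0, hv00, hv0, hS'⟩ := c.S'_near R (show (0:ℝ) < (1 - L) / 2 by linarith)
  set q := (1 + L) / 2 with hq
  have hq1 : q < 1 := by linarith
  have hq0 : 0 < q := by linarith
  obtain ⟨b, X, hb, hX, hBB⟩ := c.BB_lower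
  set K := q / (1 - q) with hK
  have hK0 : 0 < K := div_pos hq0 (by linarith)
  have hp : ∀ v, 0 < v → v ≤ v0 → Real.log (p v0) - K * (Real.log v0 - Real.log v) ≤ Real.log (p v) := by
    intro v hv hvv
    have := mvt_le (f := fun v => Real.log (p v) - K * Real.log v) (f' := fun v => S' v / (v - S v) - K * v⁻¹) (C := 0) hvv
      (fun x hx => by
        have hx0 : 0 < x := by linarith [hx.1]
        exact (R.hp x hx0 (by linarith [hx.2])).sub ((Real.hasDerivAt_log hx0.ne').const_mul K))
      (fun x hx => by
        have hx0 : 0 < x := by linarith [hx.1]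
        have h1 := (c.S_lin R hv0 hS' hx0 hx.2).2
        have h2 := (hS' x hx0 hx.2).2
        have h3 : L + (1 - L) / 2 = q := by rw [hq]; ring
        rw [h3] at h1 h2
        have h4 := c.r_pos hx0
        have h5 : S' x / (x - S x) ≤ K * x⁻¹ := by
          rw [hK, ← div_eq_mul_inv, div_div, div_le_div_iff₀ h4 (mul_pos (by linarith) hx0)]
          have h6 : (1 - q) * x ≤ x - S x := by linarith
          have h7 : 0 < (1 - q) * x := mul_pos (by linarith) hx0
          calc S' x * ((1 - q) * x) ≤ q * ((1 - q) * x) := by gcongr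
            _ ≤ _ := by gcongr
        linarith)
    linarith
  obtain ⟨k, hk⟩ := exists_nat_ge (K + 1)
  refine ⟨k, ?_⟩
  filter_upwards [eventually_ge_atTop X, c.u_tendsto.eventually (gt_mem_nhds hv00),
    Real.tendsto_log_atTop.eventually_ge_atTop 0,
    Real.tendsto_log_atTop.eventually_ge_atTop (- (Real.log (p v0) - K * (Real.log v0 - Real.log (b / 2))))] with x h1 h2 h3 h4
  have hx0 : 0 < x := by linarith
  have h5 := c.AA_le_2u hx0
  have h6 : b / x ≤ AA σ h x := div_le_div_of_nonneg_right (hBB x h1) hx0.le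
  have h7 : b / 2 / x ≤ u x := by rw [div_right_comm]; linarith
  have h8 := Real.log_le_log (by positivity) h7
  rw [Real.log_div (by positivity) hx0.ne'] at h8
  have h9 := hp (u x) (c.u_pos x) h2.le
  have : Real.log (1 / x ^ k) ≤ Real.log (p (u x)) := by
    rw [one_div, Real.log_inv, Real.log_pow]
    have e1 : (K + 1) * Real.log x ≤ k * Real.log x := by gcongr
    have e2 := mul_le_mul_of_nonneg_left h8 hK0.le
    nlinarith
  exact (Real.log_le_log_iff (by positivity) (c.p_pos _ (c.u_pos x))).1 this

lemma poly (c : Core σ H N p S u h) (R : Reg H p S S' L) :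
    ∃ k : ℕ, ∀ᶠ x in atTop, 1 / x ^ k ≤ p (u x) := by
  rcases (c.L_le R).lt_or_eq with h1 | h1
  · exact c.poly_lt R h1
  · subst h1; exact c.poly_one R

end Core

open MeasureTheory Filter Set

lemma half_ev {P : ℝ → Prop} (hP : ∀ᶠ x in atTop, P x) : ∀ᶠ x in atTop, ∀ z, x / 2 ≤ z → P z :=
  (tendsto_id.atTop_div_const (show (0:ℝ) < 2 by norm_num)).eventually (eventually_forall_ge_atTop.2 hP)

/-- basic facts on the scale `s = x^{1/8}` -/
lemma sx_facts : ∀ᶠ x in atTop, 1 ≤ x ∧ 10 ≤ sx x ∧ sx x ^ 8 = x ∧ 40 * sx x ^ 2 ≤ x ∧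
    (Kx x + 1) * (2 * sx x) ≤ 4 * sx x ^ 2 := by
  filter_upwards [sx_tendsto.eventually_ge_atTop 10, eventually_ge_atTop 1] with x hs hx1
  have hs8 := sx_pow (show 0 ≤ x by linarith)
  refine ⟨hx1, hs, hs8, ?_, win_le (by linarith)⟩
  have h1 : (10:ℝ) ^ 6 ≤ sx x ^ 6 := by gcongr
  have h2 : sx x ^ 8 = sx x ^ 6 * sx x ^ 2 := by ring
  rw [h2] at hs8
  nlinarith [sq_nonneg (sx x)]

namespace Core
variable {σ H L : ℝ} {N : ℕ} {p S u h S' : ℝ → ℝ}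

lemma den (c : Core σ H N p S u h) (R : Reg H p S S' L) :
    ∃ k : ℕ, ∀ᶠ x in atTop, ∀ z ∈ Icc (x / 2) (2 * x), 1 / x ^ k ≤ gc σ (fun z => p (u z)) z := by
  obtain ⟨k, hk⟩ := c.poly R
  have hq := gq_pos c.σ_pos (0 + 1)
  refine ⟨k + 1, ?_⟩
  filter_upwards [half_ev hk, eventually_ge_atTop 1, eventually_ge_atTop (3 ^ k / gq σ (0 + 1))] with x h1 h2 h3 z hz
  have h4 := c.den_lower (y := z) (y' := z) (ρ := 1) (R := 0) (q0 := 1 / (3 * x) ^ k) one_pos le_rfl (by positivity)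
    (fun y hy => by
      have hy0 : 0 < y := by linarith [hy.1, hz.1]
      refine le_trans ?_ (h1 y (by linarith [hy.1, hz.1]))
      apply one_div_le_one_div_of_le (by positivity)
      gcongr
      linarith [hy.2, hz.2]) (by simp)
  refine le_trans ?_ h4
  rw [div_le_iff₀ hq] at h3
  rw [mul_one, mul_pow, one_div_mul_eq_div, div_le_div_iff₀ (by positivity) (by positivity), pow_succ]
  have : 0 < x ^ k := by positivity
  nlinarith

lemma gup (c : Core σ H N p S u h) (R : Reg H p S S' L) {v0 : ℝ} (hv00 : 0 < v0)
    (hLip : ∀ v w, 0 < v → v ≤ w → w ≤ v0 → S w - S v ≤ 3 / 2 * (w - v)) :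
    ∀ᶠ x in atTop, ∀ α γ, 0 < α → α ≤ v0 / 2 → 0 ≤ γ → γ ≤ α → γ = S ((1 - 1 / (N:ℝ)) * α + γ / N) →
      (∀ z, |z - x| ≤ 4 * sx x ^ 2 → AA σ h z ≤ α) → gc σ h x ≤ γ + (v0 + 8 * H) / x ^ 2 := by
  obtain ⟨k, hk⟩ := c.den R
  have hH := c.H_pos
  filter_upwards [hk, gt_small c.σ_pos (k + 2), K_small 2, sx_facts,
    half_ev (c.g_tendsto.eventually (gt_mem_nhds (show 0 < v0 / 2 by positivity)))] with
    x h1 h2 h3 ⟨hx1, hs, hs8, hxs, hw⟩ h5 α γ hα hαv g0 g1 ge hA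
  have hx0 : 0 < x := by linarith
  have hwin : ∀ z, |z - x| ≤ (Kx x + 1) * (2 * sx x) → z ∈ Icc (x / 2) (2 * x) := fun z hz => by
    have := abs_le.1 (hz.trans hw)
    constructor <;> linarith
  have := c.osc_upper hLip (x := x) (d := sx x) (D0 := 1 / x ^ k) (E0 := v0 / 2) (Kx x) hα (by positivity) (by linarith)
    g0 g1 ge (by linarith) (by linarith) (by positivity) (fun z hz => hA z (hz.trans hw))
    (fun z hz => (h5 z (hwin z hz).1).le) (fun z hz => h1 z (hwin z hz))
  have e1 : H * gt σ (sx x) / (1 / x ^ k) ≤ H / x ^ 2 := by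
    rw [div_div_eq_mul_div, div_one, le_div_iff₀ (by positivity)]
    rw [le_div_iff₀ (by positivity), pow_add] at h2
    nlinarith
  have e2 : H * gt σ (sx x) ≤ H / x ^ 2 := by
    rw [le_div_iff₀ (by positivity)]
    rw [le_div_iff₀ (by positivity), pow_add] at h2
    have h6 : 1 ≤ x ^ k := one_le_pow₀ hx1
    have h7 : gt σ (sx x) * x ^ 2 ≤ 1 := by
      have : 0 < gt σ (sx x) * x ^ 2 := mul_pos (gt_pos _ _) (by positivity)
      nlinarith
    nlinarith
  have e3 : (3 / 4 : ℝ) ^ Kx x * (v0 / 2) ≤ 1 / x ^ 2 * v0 := by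
    have : (3 / 4 : ℝ) ^ Kx x * (v0 / 2) ≤ 1 / x ^ 2 * (v0 / 2) := by gcongr
    have : 0 < 1 / x ^ 2 * v0 := by positivity
    linarith
  have e4 : (v0 + 8 * H) / x ^ 2 = 1 / x ^ 2 * v0 + 8 * (H / x ^ 2) := by ring
  rw [e4]; linarith

lemma glow (c : Core σ H N p S u h) {v0 : ℝ}
    (hLip : ∀ v w, 0 < v → v ≤ w → w ≤ v0 → S w - S v ≤ 3 / 2 * (w - v)) :
    ∀ᶠ x in atTop, ∀ α γ, 0 < α → α ≤ v0 → 0 ≤ γ → γ ≤ α → γ = S ((1 - 1 / (N:ℝ)) * α + γ / N) →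
      (∀ z, |z - x| ≤ 4 * sx x ^ 2 → α ≤ AA σ h z) → γ - 13 * α / x ≤ gc σ h x := by
  filter_upwards [gt_small c.σ_pos 1, K_small 1, sx_facts, eventually_ge_atTop 2] with
    x h2 h3 ⟨hx1, hs, hs8, hxs, hw⟩ hx2 α γ hα hαv g0 g1 ge hA
  rw [pow_one] at h2 h3
  have hx0 : 0 < x := by linarith
  have hx' : 1 / x ≤ 1 / 2 := one_div_le_one_div_of_le (by norm_num) hx2
  have := c.osc_lower hLip (x := x) (d := sx x) (Kx x) hα (by linarith)
    g0 g1 ge (by linarith) (by linarith) (by linarith) (fun z hz => hA z (hz.trans hw))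
  have e : α * ((3 / 4) ^ Kx x + 12 * gt σ (sx x)) ≤ α * (13 * (1 / x)) := by gcongr; linarith
  have e2 : 13 * α / x = α * (13 * (1 / x)) := by ring
  linarith

/-- crude window bound for A -/
lemma AA_crude (c : Core σ H N p S u h) {x D z : ℝ} (hD : 0 ≤ D) (hx : 2 * D < x) (hz : |z - x| ≤ D) :
    AA σ h z ≤ 2 * AA σ h x + 2 * (H * D / x) := by
  have hx0 : 0 < x := by linarith
  have hz' := abs_le.1 hz
  have hz0 : 0 < z := by linarith
  have h1 : BB σ h z ≤ BB σ h x + H * D := by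
    have hH := c.H_pos
    rcases le_total z x with h2 | h2
    · have := c.BB_mono h2; nlinarith
    · have := c.BB_lip h2; nlinarith
  have h2 := c.BB_nonneg hx0.le
  have h3 : 0 ≤ H * D := mul_nonneg c.H_pos.le hD
  unfold AA
  rw [← mul_add, ← add_div, ← mul_div_assoc, div_le_div_iff₀ hz0 hx0]
  have : (BB σ h x + H * D) * x ≤ (BB σ h x + H * D) * (2 * z) := by
    apply mul_le_mul_of_nonneg_left _ (by linarith)
    linarith
  nlinarith

lemma g_crude (c : Core σ H N p S u h) (R : Reg H p S S' L) :
    ∀ᶠ x in atTop, gc σ h x ≤ 2 * AA σ h x + 9 * H * sx x ^ 2 / x := by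
  have hH := c.H_pos
  obtain ⟨v0, hv00, hv0, hLip⟩ := c.S_lip32 R
  have ht : Tendsto (fun x => 2 * AA σ h x + 2 * (H * (4 * sx x ^ 2) / x)) atTop (nhds 0) := by
    have t1 : Tendsto (fun x => 8 * H / sx x ^ 6) atTop (nhds 0) :=
      (tendsto_const_nhds).div_atTop ((tendsto_pow_atTop (by norm_num)).comp sx_tendsto)
    have t2 := (c.AA_tendsto.const_mul 2).add t1
    simp only [mul_zero, add_zero] at t2
    apply t2.congr'
    filter_upwards [sx_facts] with x ⟨hx1, hs, hs8, _⟩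
    have : 0 < sx x := by linarith
    conv_rhs => rw [← hs8]
    have h8 : sx (sx x ^ 8) = sx x := by rw [hs8]
    rw [h8]
    field_simp; ring_nf
    rw [show sx x ^ 8 = x from hs8]
    ring
  filter_upwards [c.gup R hv00 hLip, sx_facts, ht.eventually (gt_mem_nhds (show 0 < v0 / 2 by positivity)),
    sx_tendsto.eventually_ge_atTop ((v0 + 8 * H) / H)] with x h1 ⟨hx1, hs, hs8, hxs, hw⟩ h2 h3
  have hx0 : 0 < x := by linarith
  set α := 2 * AA σ h x + 2 * (H * (4 * sx x ^ 2) / x) with hα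
  have hα0 : 0 < α := by
    have := c.AA_nonneg hx0.le
    have : 0 < sx x := by linarith
    positivity
  obtain ⟨γ, g0, g1, ge⟩ := c.fixpt R hα0 (by linarith)
  have h4 := h1 α γ hα0 h2.le g0 g1 ge (fun z hz => c.AA_crude (by positivity) (by linarith) hz)
  have h5 : (v0 + 8 * H) / x ^ 2 ≤ H * sx x ^ 2 / x := by
    rw [div_le_iff₀ hH] at h3
    rw [div_le_div_iff₀ (by positivity) hx0]
    have h6 : v0 + 8 * H ≤ H * sx x ^ 2 * x := by
      have : sx x * H ≤ sx x ^ 2 * x * H := by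
        gcongr
        have : sx x ≤ sx x ^ 2 := by nlinarith
        nlinarith
      linarith
    nlinarith
  have h6 : 2 * (H * (4 * sx x ^ 2) / x) = 8 * (H * sx x ^ 2 / x) := by ring
  have h7 : 9 * H * sx x ^ 2 / x = 9 * (H * sx x ^ 2 / x) := by ring
  rw [h7]; linarith

lemma AA_osc (c : Core σ H N p S u h) (R : Reg H p S S' L) :
    ∃ C, 0 < C ∧ ∀ᶠ x in atTop, ∀ z, |z - x| ≤ 4 * sx x ^ 2 → |AA σ h z - AA σ h x| ≤ C / sx x ^ 4 * AA σ h x := by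
  have hH := c.H_pos
  obtain ⟨b, X, hb, hX, hBB⟩ := c.BB_lower
  refine ⟨2 * (16 + 352 * H / b) + 8, by positivity, ?_⟩
  filter_upwards [half_ev (c.g_crude R), sx_facts, eventually_ge_atTop X] with x h1 ⟨hx1, hs, hs8, hxs, hw⟩ hxX
  have hx0 : 0 < x := by linarith
  set s := sx x with hsd
  have hs0 : 0 < s := by linarith
  set A := AA σ h x with hA
  have hA0 : 0 ≤ A := c.AA_nonneg hx0.le
  have hBx : BB σ h x = A * x := by rw [hA]; unfold AA; rw [div_mul_cancel₀ _ hx0.ne']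
  have hbB := hBB x hxX
  rw [hBx] at hbB
  set G := 4 * A + 88 * (H * s ^ 2 / x) with hG
  have hgz : ∀ z, |z - x| ≤ 4 * s ^ 2 → gc σ h z ≤ G := by
    intro z hz
    have hz' := abs_le.1 hz
    have hz0 : 0 < z := by linarith
    have e1 := h1 z (by linarith)
    have e2 := c.AA_crude (x := x) (D := 4 * s ^ 2) (z := z) (by positivity) (by linarith) hz
    have e3 : sx z ≤ 2 * s := by
      have : sx z ≤ sx (2 ^ (8:ℝ) * x) := Real.rpow_le_rpow hz0.le (by norm_num; linarith) (by norm_num)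
      have e4 : sx (2 ^ (8:ℝ) * x) = 2 * s := by
        unfold sx at hsd ⊢
        rw [Real.mul_rpow (by positivity) hx0.le, ← hsd, ← Real.rpow_mul (by norm_num)]; norm_num
      linarith
    have e5 : 9 * H * sx z ^ 2 / z ≤ 72 * (H * s ^ 2 / x) := by
      have hsz := sx_pos hz0
      rw [← mul_div_assoc, div_le_div_iff₀ hz0 hx0]
      have : sx z ^ 2 ≤ (2 * s) ^ 2 := by gcongr
      calc 9 * H * sx z ^ 2 * x ≤ 9 * H * (2 * s) ^ 2 * (2 * z) := by gcongr; linarith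
        _ = _ := by ring
    have e6 : 2 * (H * (4 * s ^ 2) / x) = 8 * (H * s ^ 2 / x) := by ring
    rw [hG]; linarith
  have hG0 : 0 ≤ G := by positivity
  -- G * 4 s^2 ≤ C1 / s^4 * A * x
  have hGb : G * (4 * s ^ 2) ≤ (16 + 352 * H / b) / s ^ 4 * A * x := by
    have e1 : H * s ^ 2 / x ≤ H / b * s ^ 2 * A := by
      rw [div_le_iff₀ hx0]
      calc H * s ^ 2 = H / b * s ^ 2 * b := by field_simp
        _ ≤ H / b * s ^ 2 * (A * x) := by gcongr
        _ = _ := by ring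
    have e2 : G ≤ (4 + 88 * (H / b)) * (s ^ 2 * A) := by
      have : 1 * A ≤ s ^ 2 * A := by gcongr; nlinarith
      rw [hG]; nlinarith
    calc G * (4 * s ^ 2) ≤ (4 + 88 * (H / b)) * (s ^ 2 * A) * (4 * s ^ 2) := by gcongr
      _ = (16 + 352 * H / b) / s ^ 4 * A * s ^ 8 := by field_simp; ring
      _ = _ := by rw [hs8]
  intro z hz
  have hz' := abs_le.1 hz
  have hz0 : 0 < z := by linarith
  have hBz : |BB σ h z - BB σ h x| ≤ G * (4 * s ^ 2) := by
    rcases le_total z x with h2 | h2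
    · have m1 := c.BB_mono h2
      have m2 := c.BB_incr (G := G) h2 (fun y hy => hgz y (by rw [abs_le]; constructor <;> linarith [hy.1, hy.2]))
      rw [abs_le]; constructor <;> nlinarith
    · have m1 := c.BB_mono h2
      have m2 := c.BB_incr (G := G) h2 (fun y hy => hgz y (by rw [abs_le]; constructor <;> linarith [hy.1, hy.2]))
      rw [abs_le]; constructor <;> nlinarith
  have hdec : AA σ h z - A = ((BB σ h z - BB σ h x) + A * (x - z)) / z := by
    rw [hBx]; unfold AA; field_simp; ring
  rw [hdec, abs_div, abs_of_pos hz0, div_le_iff₀ hz0]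
  calc |BB σ h z - BB σ h x + A * (x - z)| ≤ |BB σ h z - BB σ h x| + |A * (x - z)| := abs_add_le _ _
    _ ≤ (16 + 352 * H / b) / s ^ 4 * A * x + A * (4 * s ^ 2) := by
        gcongr
        · linarith
        · rw [abs_mul, abs_of_nonneg hA0, abs_sub_comm]; gcongr
    _ ≤ (16 + 352 * H / b) / s ^ 4 * A * x + A * (4 * x / s ^ 4) := by
        gcongr
        rw [le_div_iff₀ (by positivity), ← hs8]
        have : s ^ 6 ≤ s ^ 8 := by gcongr <;> [linarith; norm_num]
        nlinarith
    _ = ((16 + 352 * H / b) + 4) / s ^ 4 * A * x := by ring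
    _ ≤ ((16 + 352 * H / b) + 4) / s ^ 4 * A * (2 * z) := by gcongr; linarith
    _ = _ := by ring

set_option maxHeartbeats 1000000 in
lemma g_S (c : Core σ H N p S u h) (R : Reg H p S S' L) :
    ∃ C, 0 < C ∧ ∀ᶠ x in atTop, |gc σ h x - S (u x)| ≤ C / sx x ^ 4 * AA σ h x := by
  have hH := c.H_pos
  have hN0 := c.Ninv_pos
  have hN1 := c.Ninv_le
  obtain ⟨v0, hv00, hv0, hLip⟩ := c.S_lip32 R
  obtain ⟨b, X, hb, hX, hBB⟩ := c.BB_lower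
  obtain ⟨C, hC, hosc⟩ := c.AA_osc R
  have tη : Tendsto (fun x => C / sx x ^ 4) atTop (nhds 0) :=
      (tendsto_const_nhds).div_atTop ((tendsto_pow_atTop (by norm_num)).comp sx_tendsto)
  refine ⟨12 * C + 4, by positivity, ?_⟩
  filter_upwards [hosc, c.gup R hv00 hLip, c.glow hLip, sx_facts, eventually_ge_atTop X,
    tη.eventually (gt_mem_nhds (show (0:ℝ) < 1 / 2 by norm_num)),
    c.AA_tendsto.eventually (gt_mem_nhds (show 0 < v0 / 16 by positivity)),
    sx_tendsto.eventually_ge_atTop ((v0 + 8 * H) / b), sx_tendsto.eventually_ge_atTop 26,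
    c.g_tendsto.eventually (gt_mem_nhds (show 0 < v0 / 2 by positivity))] with
    x hosc hgup hglow ⟨hx1, hs, hs8, hxs, hw⟩ hxX hη1 hAv hsv hs26 hgv
  have hx0 : 0 < x := by linarith
  set s := sx x with hsd
  have hs0 : 0 < s := by linarith
  set A := AA σ h x with hA
  have hbA : b ≤ A * x := by
    have := hBB x hxX
    rw [hA]; unfold AA; rw [div_mul_cancel₀ _ hx0.ne']; exact this
  have hA0 : 0 < A := by
    by_contra hcc
    push Not at hcc
    nlinarith
  set η := C / s ^ 4 with hη
  have hη0 : 0 < η := by positivity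
  set E := A / s ^ 4 with hE
  have hE0 : 0 < E := by positivity
  have hEη : A * η = C * E := by rw [hE, hη]; ring
  have hAη0 : 0 < A * η := by positivity
  have hAη1 : A * η ≤ A / 2 := by
    have := mul_le_mul_of_nonneg_left hη1.le hA0.le
    linarith
  have x1 : A * (1 - η) = A - A * η := by ring
  have x2 : A * (1 + η) = A + A * η := by ring
  obtain ⟨γ1, g10, g11, g1e⟩ := c.fixpt R (show 0 < A * (1 - η) from mul_pos hA0 (by linarith)) (by linarith)
  obtain ⟨γ2, g20, g21, g2e⟩ := c.fixpt R (show 0 < A * (1 + η) from mul_pos hA0 (by linarith)) (by linarith)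
  have hlo := hglow (A * (1 - η)) γ1 (mul_pos hA0 (by linarith)) (by linarith) g10 g11 g1e (fun z hz => by
    have := abs_le.1 (hosc z hz); linarith)
  have hup := hgup (A * (1 + η)) γ2 (mul_pos hA0 (by linarith)) (by linarith) g20 g21 g2e (fun z hz => by
    have := abs_le.1 (hosc z hz); linarith)
  have e1 : 13 * (A * (1 - η)) / x ≤ E := by
    rw [hE, div_le_div_iff₀ hx0 (by positivity), ← hs8]
    have h2 : (26:ℝ) ^ 4 ≤ s ^ 4 := by gcongr
    have h3 : 0 < A * s ^ 4 := by positivity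
    have h4 : 13 * (A * (1 - η)) * s ^ 4 ≤ 13 * (A * s ^ 4) := by
      have : 0 ≤ A * s ^ 4 * η := by positivity
      linarith
    have h5 : 13 * (A * s ^ 4) ≤ s ^ 4 * (A * s ^ 4) := by gcongr; linarith
    calc _ ≤ _ := h4
      _ ≤ _ := h5
      _ = _ := by ring
  have e2 : (v0 + 8 * H) / x ^ 2 ≤ E := by
    rw [hE, div_le_div_iff₀ (by positivity) (by positivity)]
    rw [div_le_iff₀ hb] at hsv
    have h2 : s ^ 5 ≤ x := by rw [← hs8]; gcongr <;> [linarith; norm_num]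
    calc (v0 + 8 * H) * s ^ 4 ≤ s * b * s ^ 4 := by gcongr
      _ = b * s ^ 5 := by ring
      _ ≤ A * x * x := by gcongr
      _ = _ := by ring
  have hcmp := c.fix_cmp hLip (mul_pos hA0 (by linarith)) (show A * (1 - η) ≤ A * (1 + η) by linarith) (by linarith)
    g10 g20 g21 g1e g2e
  have hE1 : E ≤ A := by
    rw [hE, div_le_iff₀ (by positivity)]
    have : 1 ≤ s ^ 4 := one_le_pow₀ (by linarith)
    nlinarith
  have hu := c.u_AA hx0
  rw [← hA] at hu
  have hux := c.u_pos x
  set t := 1 / (N:ℝ) with ht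
  have hdiv : ∀ a : ℝ, a / N = a * t := fun a => by rw [ht]; ring
  rw [hdiv] at hu g1e g2e
  have hU2 : 0 < (1 - t) * (A * (1 + η)) + γ2 * t := by
    have h1 : 0 < (1 - t) * (A * (1 + η)) := mul_pos (by linarith) (mul_pos hA0 (by linarith))
    linarith [mul_nonneg g20 hN0.le]
  have hU1 : 0 < (1 - t) * (A * (1 - η)) + γ1 * t := by
    have h1 : 0 < (1 - t) * (A * (1 - η)) := mul_pos (by linarith) (mul_pos hA0 (by linarith))
    linarith [mul_nonneg g10 hN0.le]
  have hSu2 : S (u x) ≤ γ2 + 3 / 2 * E := by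
    have h1 : u x ≤ (1 - t) * (A * (1 + η)) + γ2 * t + E := by
      have q1 : gc σ h x * t ≤ (γ2 + E) * t := by gcongr; linarith
      have q2 : (1 - t) * A ≤ (1 - t) * (A * (1 + η)) := mul_le_mul_of_nonneg_left (by linarith) (by linarith)
      have q3 : E * t ≤ E * 1 := by gcongr; linarith
      rw [hu]; linarith
    have h2 := c.S_mono _ _ hux h1
    have h3 := hLip _ ((1 - t) * (A * (1 + η)) + γ2 * t + E) hU2 (by linarith) (by
      have q1 : (1 - t) * (A * (1 + η)) ≤ 1 * (A * (1 + η)) := by gcongr; linarith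
      have q2 : γ2 * t ≤ γ2 * 1 := by gcongr; linarith
      linarith)
    rw [← g2e] at h3
    linarith
  have hSu1 : γ1 - 3 / 2 * E ≤ S (u x) := by
    have h1 : (1 - t) * (A * (1 - η)) + γ1 * t ≤ u x + E := by
      have q1 : (γ1 - E) * t ≤ gc σ h x * t := by gcongr; linarith
      have q2 : (1 - t) * (A * (1 - η)) ≤ (1 - t) * A := mul_le_mul_of_nonneg_left (by linarith) (by linarith)
      have q3 : E * t ≤ E * 1 := by gcongr; linarith
      rw [hu]; linarith
    have h2 := c.S_mono _ _ hU1 h1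
    have h3 := hLip (u x) (u x + E) hux (by linarith) (by
      have q1 : (1 - t) * A ≤ 1 * A := by gcongr; linarith
      have q2 : gc σ h x * t ≤ gc σ h x * 1 := by gcongr <;> [exact c.g_nonneg x; linarith]
      rw [hu]; linarith)
    rw [← g1e] at h2
    linarith
  have e3 : (12 * C + 4) / s ^ 4 * A = 12 * (C * E) + 4 * E := by rw [hE]; ring
  rw [e3, abs_le]
  constructor <;> linarith

end Core

open MeasureTheory Filter Set

lemma log_mvt {φ φ' : ℝ → ℝ} {X ε a b : ℝ} (hX : 0 < X) (hφ : ∀ y, X ≤ y → HasDerivAt φ (φ' y) y)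
    (hε : ∀ y, X ≤ y → |y * φ' y| ≤ ε) (ha : X ≤ a) (hab : a ≤ b) :
    |φ b - φ a| ≤ ε * (Real.log b - Real.log a) := by
  have h1 := mvt_le (f := fun y => φ y - ε * Real.log y) (f' := fun y => φ' y - ε * y⁻¹) (C := 0) hab
    (fun y hy => by
      have hy0 : 0 < y := by linarith [hy.1]
      exact (hφ y (by linarith [hy.1])).sub ((Real.hasDerivAt_log hy0.ne').const_mul ε))
    (fun y hy => by
      have hy0 : 0 < y := by linarith [hy.1]
      have := (abs_le.1 (hε y (by linarith [hy.1]))).2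
      have h2 : φ' y ≤ ε * y⁻¹ := by rw [← div_eq_mul_inv, le_div_iff₀ hy0]; linarith
      linarith)
  have h2 := mvt_le (f := fun y => - φ y - ε * Real.log y) (f' := fun y => - φ' y - ε * y⁻¹) (C := 0) hab
    (fun y hy => by
      have hy0 : 0 < y := by linarith [hy.1]
      exact (hφ y (by linarith [hy.1])).neg.sub ((Real.hasDerivAt_log hy0.ne').const_mul ε))
    (fun y hy => by
      have hy0 : 0 < y := by linarith [hy.1]
      have := (abs_le.1 (hε y (by linarith [hy.1]))).1
      have h2 : - φ' y ≤ ε * y⁻¹ := by rw [← div_eq_mul_inv, le_div_iff₀ hy0]; linarith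
      linarith)
  rw [abs_le]; constructor <;> linarith

/-- slowly varying lemma -/
lemma slow {φ φ' : ℝ → ℝ} {X : ℝ} (hφ : ∀ y, X ≤ y → HasDerivAt φ (φ' y) y)
    (h0 : Tendsto (fun y => y * φ' y) atTop (nhds 0)) {l : ℝ} (hl : 0 < l) :
    Tendsto (fun α => φ (α * l) - φ α) atTop (nhds 0) := by
  rw [Metric.tendsto_atTop]
  intro ε hε
  set δ := ε / (|Real.log l| + 1) with hδ
  have hδ0 : 0 < δ := by positivity
  obtain ⟨Y, hY⟩ := eventually_atTop.1 (h0.eventually (Metric.ball_mem_nhds 0 hδ0))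
  set Z := max (max X Y) 1 with hZ
  have hZX : X ≤ Z := (le_max_left _ _).trans (le_max_left _ _)
  have hZY : Y ≤ Z := (le_max_right _ _).trans (le_max_left _ _)
  have hZ1 : 1 ≤ Z := le_max_right _ _
  refine ⟨max Z (Z / l), fun α hα => ?_⟩
  have hα1 : Z ≤ α := (le_max_left _ _).trans hα
  have hα2 : Z ≤ α * l := by rw [← div_le_iff₀ hl]; exact (le_max_right _ _).trans hα
  have hb : ∀ y, Z ≤ y → |y * φ' y| ≤ δ := fun y hy => by
    have := hY y (hZY.trans hy)
    rw [Real.dist_eq, sub_zero] at this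
    exact this.le
  have hlog : Real.log (α * l) = Real.log α + Real.log l := Real.log_mul (by linarith) hl.ne'
  rw [Real.dist_eq, sub_zero]
  have key : |φ (α * l) - φ α| ≤ δ * |Real.log l| := by
    rcases le_total α (α * l) with h1 | h1
    · have := log_mvt (by linarith) (fun y hy => hφ y (hZX.trans hy)) hb hα1 h1
      rw [hlog] at this
      refine this.trans ?_
      gcongr
      linarith [le_abs_self (Real.log l)]
    · have := log_mvt (by linarith) (fun y hy => hφ y (hZX.trans hy)) hb hα2 h1
      rw [hlog] at this
      rw [abs_sub_comm]
      refine this.trans ?_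
      gcongr
      linarith [neg_le_abs (Real.log l)]
  refine key.trans_lt ?_
  rw [hδ, div_mul_eq_mul_div, div_lt_iff₀ (by positivity)]
  nlinarith [abs_nonneg (Real.log l)]

lemma log_rate {φ φ' : ℝ → ℝ} {X β : ℝ} (hφ : ∀ y, X ≤ y → HasDerivAt φ (φ' y) y)
    (h0 : Tendsto (fun y => y * φ' y) atTop (nhds β)) :
    Tendsto (fun x => φ x / Real.log x) atTop (nhds β) := by
  rw [Metric.tendsto_atTop']
  intro ε hε
  obtain ⟨Y, hY⟩ := eventually_atTop.1 (h0.eventually (Metric.ball_mem_nhds β (half_pos hε)))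
  set Z := max (max X Y) 1 with hZ
  have hZX : X ≤ Z := (le_max_left _ _).trans (le_max_left _ _)
  have hZY : Y ≤ Z := (le_max_right _ _).trans (le_max_left _ _)
  have hZ1 : 1 ≤ Z := le_max_right _ _
  have key : ∀ x, Z ≤ x → |φ x - β * Real.log x - (φ Z - β * Real.log Z)| ≤ ε / 2 * (Real.log x - Real.log Z) := by
    intro x hx
    refine log_mvt (φ := fun y => φ y - β * Real.log y) (φ' := fun y => φ' y - β * y⁻¹) (X := Z) (by linarith)
      (fun y hy => ?_) (fun y hy => ?_) le_rfl hx
    · exact (hφ y (hZX.trans hy)).sub ((Real.hasDerivAt_log (by linarith)).const_mul β)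
    · have h1 := hY y (hZY.trans hy)
      rw [Real.dist_eq] at h1
      have h2 : y * (φ' y - β * y⁻¹) = y * φ' y - β := by
        have : y ≠ 0 := by linarith
        field_simp
      rw [h2]; exact h1.le
  set Q := |φ Z - β * Real.log Z| with hQ
  have hlZ : 0 ≤ Real.log Z := Real.log_nonneg hZ1
  obtain ⟨W, hW⟩ := eventually_atTop.1 (Real.tendsto_log_atTop.eventually_gt_atTop (2 * Q / ε))
  refine ⟨max W Z, fun x hx => ?_⟩
  have h1 := key x ((le_max_right _ _).trans hx.le)
  have h2 := hW x ((le_max_left _ _).trans hx.le)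
  have hlx : 0 < Real.log x := lt_of_le_of_lt (by positivity) h2
  rw [div_lt_iff₀ hε] at h2
  rw [Real.dist_eq, show φ x / Real.log x - β = (φ x - β * Real.log x) / Real.log x by field_simp, abs_div, abs_of_pos hlx,
    div_lt_iff₀ hlx]
  have h3 := abs_sub_abs_le_abs_sub (φ x - β * Real.log x) (φ Z - β * Real.log Z)
  nlinarith

namespace Core
variable {σ H L : ℝ} {N : ℕ} {p S u h S' : ℝ → ℝ}

lemma u_tendsto' (c : Core σ H N p S u h) : Tendsto u atTop (nhdsWithin 0 (Ioi 0)) :=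
  tendsto_nhdsWithin_iff.2 ⟨c.u_tendsto, Filter.Eventually.of_forall c.u_pos⟩

lemma S_ratio (c : Core σ H N p S u h) (R : Reg H p S S' L) :
    Tendsto (fun v => S v / v) (nhdsWithin 0 (Ioi 0)) (nhds L) := by
  rw [Metric.tendsto_nhds]
  intro ε hε
  obtain ⟨v0, h0, h1, h2⟩ := c.S'_near R (half_pos hε)
  filter_upwards [Ioo_mem_nhdsGT h0] with v hv
  have := c.S_lin R h1 h2 hv.1 hv.2.le
  have a1 : L - ε / 2 ≤ S v / v := by rw [le_div_iff₀ hv.1]; exact this.1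
  have a2 : S v / v ≤ L + ε / 2 := by rw [div_le_iff₀ hv.1]; exact this.2
  rw [Real.dist_eq, abs_lt]; constructor <;> linarith

lemma err_tendsto (c : Core σ H N p S u h) (R : Reg H p S S' L) :
    Tendsto (fun x => (gc σ h x - S (u x)) / AA σ h x) atTop (nhds 0) := by
  obtain ⟨C, hC, hg⟩ := c.g_S R
  obtain ⟨X, hX, hpos⟩ := c.AA_pos_ev
  have tη : Tendsto (fun x => C / sx x ^ 4) atTop (nhds 0) :=
      (tendsto_const_nhds).div_atTop ((tendsto_pow_atTop (by norm_num)).comp sx_tendsto)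
  apply squeeze_zero_norm' _ tη
  filter_upwards [hg, eventually_ge_atTop X] with x h1 h2
  have hA := hpos x h2
  rw [Real.norm_eq_abs, abs_div, abs_of_pos hA, div_le_iff₀ hA]
  exact h1

lemma gA (c : Core σ H N p S u h) (R : Reg H p S S' L) :
    Tendsto (fun x => gc σ h x / AA σ h x) atTop (nhds (L * (1 - 1 / (N:ℝ)) / (1 - 1 / (N:ℝ) * L))) := by
  obtain ⟨X, hX, hpos⟩ := c.AA_pos_ev
  have hN0 := c.Ninv_pos
  have hN1 := c.Ninv_le
  have hL := c.L_le R
  set t := 1 / (N:ℝ) with ht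
  have hω := (c.S_ratio R).comp c.u_tendsto'
  have hd : 1 - t * L ≠ 0 := by
    have : t * L ≤ t * 1 := by gcongr
    linarith
  have hmain := ((hω.mul_const (1 - t)).add (c.err_tendsto R)).div ((hω.const_mul t).const_sub 1) hd
  rw [add_zero] at hmain
  refine hmain.congr' ?_
  filter_upwards [eventually_ge_atTop X, hω.eventually (gt_mem_nhds (show L < 3 / 2 by linarith))] with x hx hω1
  have hA := hpos x hx
  have hu := c.u_AA (show 0 < x by linarith)
  have hux := c.u_pos x
  simp only [Function.comp] at hω1 ⊢
  set ω := S (u x) / u x with hωd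
  have hSu : S (u x) = ω * u x := by rw [hωd, div_mul_cancel₀ _ hux.ne']
  rw [div_eq_mul_one_div, ← ht] at hu
  have hd' : 1 - t * ω ≠ 0 := by nlinarith
  simp only [Pi.div_apply]
  rw [← hωd]
  clear_value ω
  rw [div_eq_div_iff hd' hA.ne', hSu, add_mul, div_mul_cancel₀ _ hA.ne', hu]
  ring

lemma rate (c : Core σ H N p S u h) (R : Reg H p S S' L) :
    Tendsto (fun x => (gc σ h x - AA σ h x) / AA σ h x) atTop (nhds ((L - 1) / (1 - L / (N:ℝ)))) := by
  obtain ⟨X, hX, hpos⟩ := c.AA_pos_ev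
  have hN0 := c.Ninv_pos
  have hN1 := c.Ninv_le
  have hL := c.L_le R
  have hd : 1 - 1 / (N:ℝ) * L ≠ 0 := by
    have : 1 / (N:ℝ) * L ≤ 1 / (N:ℝ) * 1 := by gcongr
    linarith
  have h1 := (c.gA R).sub_const 1
  have e : L * (1 - 1 / (N:ℝ)) / (1 - 1 / (N:ℝ) * L) - 1 = (L - 1) / (1 - L / (N:ℝ)) := by
    rw [div_eq_mul_one_div L, mul_comm L (1 / (N:ℝ)), eq_div_iff hd, sub_mul, div_mul_cancel₀ _ hd]; ring
  rw [e] at h1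
  refine h1.congr' ?_
  filter_upwards [eventually_ge_atTop X] with x hx
  have hA := hpos x hx
  field_simp

lemma uA (c : Core σ H N p S u h) (R : Reg H p S S' L) :
    Tendsto (fun x => u x / AA σ h x) atTop (nhds ((1 - 1 / (N:ℝ)) / (1 - 1 / (N:ℝ) * L))) := by
  obtain ⟨X, hX, hpos⟩ := c.AA_pos_ev
  have hN0 := c.Ninv_pos
  have hN1 := c.Ninv_le
  have hL := c.L_le R
  have hd : 1 - 1 / (N:ℝ) * L ≠ 0 := by
    have : 1 / (N:ℝ) * L ≤ 1 / (N:ℝ) * 1 := by gcongr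
    linarith
  have h1 := ((c.gA R).const_mul (1 / (N:ℝ))).add_const (1 - 1 / (N:ℝ))
  have e : 1 / (N:ℝ) * (L * (1 - 1 / (N:ℝ)) / (1 - 1 / (N:ℝ) * L)) + (1 - 1 / (N:ℝ)) = (1 - 1 / (N:ℝ)) / (1 - 1 / (N:ℝ) * L) := by
    rw [eq_div_iff hd, add_mul, mul_assoc (1 / (N:ℝ)), div_mul_cancel₀ _ hd]; ring
  rw [e] at h1
  refine h1.congr' ?_
  filter_upwards [eventually_ge_atTop X] with x hx
  have hA := hpos x hx
  rw [c.u_AA (show 0 < x by linarith), div_eq_mul_one_div (gc σ h x) (N:ℝ), add_div, mul_div_cancel_right₀ _ hA.ne']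
  ring

lemma logA_deriv (c : Core σ H N p S u h) : ∃ X, 1 ≤ X ∧ (∀ x, X ≤ x → 0 < AA σ h x) ∧ ∀ x, X ≤ x →
    HasDerivAt (fun y => Real.log (AA σ h y)) ((gc σ h x - AA σ h x) / x / AA σ h x) x := by
  obtain ⟨X, hX, hpos⟩ := c.AA_pos_ev
  exact ⟨X, hX, hpos, fun x hx => (c.AA_deriv (by linarith)).log (hpos x hx).ne'⟩

theorem partA (c : Core σ H N p S u h) (R : Reg H p S S' L) {l : ℝ} (hl : 0 < l) :
    Tendsto (fun α => u (α * l) / u α) atTop (nhds (l ^ ((L - 1) / (1 - L / (N:ℝ))))) := by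
  obtain ⟨X, hX, hpos, hder⟩ := c.logA_deriv
  have hN0 := c.Ninv_pos
  have hN1 := c.Ninv_le
  have hL := c.L_le R
  set ρ := (L - 1) / (1 - L / (N:ℝ)) with hρ
  have hd : 0 < 1 - 1 / (N:ℝ) * L := by
    have : 1 / (N:ℝ) * L ≤ 1 / (N:ℝ) * 1 := by gcongr
    linarith
  have hsl := slow (φ := fun y => Real.log (AA σ h y) - ρ * Real.log y)
    (φ' := fun x => (gc σ h x - AA σ h x) / x / AA σ h x - ρ * x⁻¹) (X := X)
    (fun y hy => (hder y hy).sub ((Real.hasDerivAt_log (by linarith)).const_mul ρ))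
    (by
      have := (c.rate R).sub_const ρ
      rw [← hρ, sub_self] at this
      refine this.congr' ?_
      filter_upwards [eventually_ge_atTop X] with x hx
      have hA := hpos x hx
      have : x ≠ 0 := by linarith
      field_simp) hl
  have hmul : Tendsto (fun α : ℝ => α * l) atTop atTop := tendsto_id.atTop_mul_const hl
  have hAr : Tendsto (fun α => AA σ h (α * l) / AA σ h α) atTop (nhds (l ^ ρ)) := by
    have h1 := (Real.continuous_exp.tendsto _).comp (hsl.add_const (ρ * Real.log l))
    have e : Real.exp (0 + ρ * Real.log l) = l ^ ρ := by
      rw [zero_add, mul_comm, Real.rpow_def_of_pos hl]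
    rw [e] at h1
    refine h1.congr' ?_
    filter_upwards [eventually_ge_atTop X, hmul.eventually_ge_atTop X] with α h1 h2
    have a1 := hpos α h1
    have a2 := hpos _ h2
    simp only [Function.comp]
    rw [Real.log_mul (by linarith) hl.ne']
    rw [show Real.log (AA σ h (α * l)) - ρ * (Real.log α + Real.log l) - (Real.log (AA σ h α) - ρ * Real.log α) + ρ * Real.log l
      = Real.log (AA σ h (α * l)) - Real.log (AA σ h α) by ring, Real.exp_sub, Real.exp_log a1, Real.exp_log a2]
  have hU := c.uA R
  have hUne : (1 - 1 / (N:ℝ)) / (1 - 1 / (N:ℝ) * L) ≠ 0 := (div_pos (by linarith) hd).ne'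
  have hfin := ((hU.comp hmul).div hU hUne).mul hAr
  rw [div_self hUne, one_mul] at hfin
  refine hfin.congr' ?_
  filter_upwards [eventually_ge_atTop X, hmul.eventually_ge_atTop X] with α h1 h2
  have a1 := hpos α h1
  have a2 := hpos _ h2
  have a3 := c.u_pos α
  simp only [Function.comp, Pi.div_apply]
  field_simp

theorem partB (c : Core σ H N p S u h) (R : Reg H p S S' 1) {n : ℕ} (hn : 1 ≤ n) {k : ℝ} (hk : 0 < k)
    (hr : Tendsto (fun v => (v - S v) / v ^ (n + 1)) (nhdsWithin 0 (Ioi 0)) (nhds (1 / k))) :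
    Tendsto (fun x => u x / ((((N:ℝ) / ((N:ℝ) - 1)) * ((n:ℝ) / k)) ^ (-(1:ℝ) / (n:ℝ)) *
            Real.log x ^ (-(1:ℝ) / (n:ℝ)))) atTop (nhds 1) := by
  obtain ⟨X, hX, hpos, hder⟩ := c.logA_deriv
  have hN0 := c.Ninv_pos
  have hN1 := c.Ninv_le
  have hN2 : (2:ℝ) ≤ N := by exact_mod_cast c.N2
  have hn0 : (0:ℝ) < n := by exact_mod_cast hn
  have hU : Tendsto (fun x => u x / AA σ h x) atTop (nhds 1) := by
    have := c.uA R
    rwa [mul_one, div_self (by linarith)] at this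
  have hrate : Tendsto (fun x => (gc σ h x - AA σ h x) / AA σ h x) atTop (nhds 0) := by
    have := c.rate R
    simpa using this
  -- slow lower bound
  have hslow : ∃ b, 0 < b ∧ ∀ᶠ x in atTop, b ≤ AA σ h x ^ n * sx x ^ 2 := by
    obtain ⟨Y, hY⟩ := eventually_atTop.1 (hrate.eventually (Metric.ball_mem_nhds 0 (show (0:ℝ) < 1 / (4 * n) by positivity)))
    set Z := max X Y with hZ
    have hZX : X ≤ Z := le_max_left _ _
    refine ⟨Real.exp (n * Real.log (AA σ h Z)), Real.exp_pos _, ?_⟩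
    filter_upwards [eventually_ge_atTop Z] with x hx
    have hx0 : 0 < x := by linarith
    have hA := hpos x (hZX.trans hx)
    have h1 := log_mvt (φ := fun y => Real.log (AA σ h y)) (X := Z) (ε := 1 / (4 * n)) (by linarith)
      (fun y hy => hder y (hZX.trans hy)) (fun y hy => by
        have h2 := hY y ((le_max_right _ _).trans hy)
        rw [Real.dist_eq, sub_zero] at h2
        have h3 : y ≠ 0 := by linarith
        have : y * ((gc σ h y - AA σ h y) / y / AA σ h y) = (gc σ h y - AA σ h y) / AA σ h y := by field_simp
        rw [this]; exact h2.le) le_rfl hx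
    have h2 := (abs_le.1 h1).1
    have hs := sx_pos hx0
    rw [← Real.le_log_iff_exp_le (by positivity), Real.log_mul (by positivity) (by positivity), Real.log_pow, Real.log_pow, log_sx hx0]
    have h3 : 0 ≤ Real.log Z := Real.log_nonneg (by linarith)
    have h4 : (n:ℝ) * (1 / (4 * n) * (Real.log x - Real.log Z)) = (Real.log x - Real.log Z) / 4 := by field_simp
    have h5 := mul_le_mul_of_nonneg_left h2 hn0.le
    push_cast
    nlinarith
  obtain ⟨b, hb, hbev⟩ := hslow
  have herr : Tendsto (fun x => (gc σ h x - S (u x)) / AA σ h x ^ (n + 1)) atTop (nhds 0) := by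
    obtain ⟨C, hC, hg⟩ := c.g_S R
    have tη : Tendsto (fun x => C / b / sx x ^ 2) atTop (nhds 0) :=
      (tendsto_const_nhds).div_atTop ((tendsto_pow_atTop (by norm_num)).comp sx_tendsto)
    apply squeeze_zero_norm' _ tη
    filter_upwards [hg, eventually_ge_atTop X, hbev] with x h1 h2 h3
    have hA := hpos x h2
    have hs := sx_pos (show 0 < x by linarith)
    rw [Real.norm_eq_abs, abs_div, abs_of_pos (pow_pos hA _), div_le_iff₀ (by positivity)]
    refine h1.trans ?_
    calc C / sx x ^ 4 * AA σ h x = C / b / sx x ^ 4 * AA σ h x * b := by field_simp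
      _ ≤ C / b / sx x ^ 4 * AA σ h x * (AA σ h x ^ n * sx x ^ 2) := by gcongr
      _ = _ := by
        field_simp
        ring
  have hrA : Tendsto (fun x => (u x - S (u x)) / AA σ h x ^ (n + 1)) atTop (nhds (1 / k)) := by
    have h1 := (hr.comp c.u_tendsto').mul (hU.pow (n + 1))
    rw [one_pow, mul_one] at h1
    refine h1.congr' ?_
    filter_upwards [eventually_ge_atTop X] with x hx
    have hA := hpos x hx
    have hu := c.u_pos x
    simp only [Function.comp]
    rw [div_pow]
    field_simp
  set c0 := ((N:ℝ) / ((N:ℝ) - 1)) * ((n:ℝ) / k) with hc0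
  have hc00 : 0 < c0 := by
    have : 0 < (N:ℝ) - 1 := by linarith
    positivity
  have hAg : Tendsto (fun x => n * ((AA σ h x - gc σ h x) / AA σ h x ^ (n + 1))) atTop (nhds c0) := by
    have h1 := ((hrA.sub herr).const_mul ((N:ℝ) / ((N:ℝ) - 1))).const_mul (n:ℝ)
    have e : (n:ℝ) * ((N:ℝ) / ((N:ℝ) - 1) * (1 / k - 0)) = c0 := by rw [hc0]; ring
    rw [e] at h1
    refine h1.congr' ?_
    filter_upwards [eventually_ge_atTop X] with x hx
    have hA := hpos x hx
    have hu := c.u_AA (show 0 < x by linarith)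
    have hN3 : (N:ℝ) - 1 ≠ 0 := by linarith
    have hN4 : (N:ℝ) ≠ 0 := by linarith
    rw [← sub_div]
    congr 1
    rw [← mul_div_assoc]
    congr 1
    rw [hu]
    field_simp
    ring
  have hW := log_rate (φ := fun x => (AA σ h x ^ n)⁻¹)
    (φ' := fun x => -(n * AA σ h x ^ (n - 1) * ((gc σ h x - AA σ h x) / x)) / (AA σ h x ^ n) ^ 2) (X := X)
    (fun y hy => by
      have hA := hpos y hy
      exact ((c.AA_deriv (show 0 < y by linarith)).pow n).inv (pow_pos hA n).ne') (by
      refine hAg.congr' ?_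
      filter_upwards [eventually_ge_atTop X] with x hx
      have hA := hpos x hx
      have hx0 : x ≠ 0 := by linarith
      obtain ⟨m, rfl⟩ : ∃ m, n = m + 1 := ⟨n - 1, by omega⟩
      rw [Nat.add_sub_cancel]
      field_simp
      ring)
  have hW1 := hW.div_const c0
  rw [div_self hc00.ne'] at hW1
  have hW2 := hW1.rpow_const (p := -(1:ℝ) / n) (Or.inl one_ne_zero)
  rw [Real.one_rpow] at hW2
  have hfin := hU.mul hW2
  rw [one_mul] at hfin
  refine hfin.congr' ?_
  filter_upwards [eventually_ge_atTop X, eventually_gt_atTop 1] with x hx hx1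
  have hA := hpos x hx
  have hl := Real.log_pos hx1
  rw [Real.div_rpow (by positivity) hc00.le, Real.div_rpow (by positivity) hl.le]
  have e1 : ((AA σ h x ^ n)⁻¹) ^ (-(1:ℝ) / n) = AA σ h x := by
    rw [← Real.rpow_natCast, ← Real.rpow_neg hA.le, ← Real.rpow_mul hA.le]
    rw [show -(n:ℝ) * (-(1:ℝ) / n) = 1 by field_simp, Real.rpow_one]
  rw [e1]
  have a1 : 0 < c0 ^ (-(1:ℝ) / n) := Real.rpow_pos_of_pos hc00 _
  have a2 : 0 < Real.log x ^ (-(1:ℝ) / n) := Real.rpow_pos_of_pos hl _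
  field_simp

end Core

open MeasureTheory Filter Set

set_option linter.unusedSectionVars false
section prob
variable {Ω : Type*} [MeasurableSpace Ω] {P : Measure Ω} [IsProbabilityMeasure P] {V : Ω → ℝ} {m M : ℝ}

lemma set_ge (hV : Integrable V P) {s : Set Ω} (hs : MeasurableSet s) {c : ℝ} (h : ∀ᵐ ω ∂P, ω ∈ s → c ≤ V ω) :
    c * (P s).toReal ≤ ∫ ω in s, V ω ∂P := by
  have h1 : ∫ _ in s, c ∂P = c * (P s).toReal := by
    rw [setIntegral_const, smul_eq_mul, mul_comm]; rfl
  rw [← h1]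
  exact setIntegral_mono_on_ae (integrable_const c).integrableOn hV.integrableOn hs h

lemma set_le (hV : Integrable V P) {s : Set Ω} (hs : MeasurableSet s) {c : ℝ} (h : ∀ᵐ ω ∂P, ω ∈ s → V ω ≤ c) :
    ∫ ω in s, V ω ∂P ≤ c * (P s).toReal := by
  have h1 : ∫ _ in s, c ∂P = c * (P s).toReal := by
    rw [setIntegral_const, smul_eq_mul, mul_comm]; rfl
  rw [← h1]
  exact setIntegral_mono_on_ae hV.integrableOn (integrable_const c).integrableOn hs h

lemma ms_gt (hVm : Measurable V) (y : ℝ) : MeasurableSet {ω | V ω > y} := measurableSet_lt measurable_const hVm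
lemma ms_le (hVm : Measurable V) (y : ℝ) : MeasurableSet {ω | V ω ≤ y} := measurableSet_le hVm measurable_const
lemma ms_oc (hVm : Measurable V) (y z : ℝ) : MeasurableSet {ω | V ω > y ∧ V ω ≤ z} := (ms_gt hVm y).inter (ms_le hVm z)

lemma Pip_diff (hVm : Measurable V) {y z : ℝ} (hyz : y ≤ z) :
    Pip P V y - Pip P V z = (P {ω | V ω > y ∧ V ω ≤ z}).toReal := by
  have : {ω | V ω > y} = {ω | V ω > y ∧ V ω ≤ z} ∪ {ω | V ω > z} := by
    ext ω; simp only [mem_ofPred_eq, mem_union]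
    constructor
    · intro h; rcases le_or_gt (V ω) z with h1 | h1
      · exact Or.inl ⟨h, h1⟩
      · exact Or.inr h1
    · rintro (h | h)
      · exact h.1
      · exact lt_of_le_of_lt hyz h
  unfold Pip
  rw [this, measure_union _ (ms_gt hVm z), ENNReal.toReal_add (measure_ne_top _ _) (measure_ne_top _ _)]
  · ring
  · rw [Set.disjoint_left]; intro ω h1 h2
    exact absurd h1.2 (not_le.2 h2)

lemma Phip_diff (hVm : Measurable V) (hV : Integrable V P) {y z : ℝ} (hyz : y ≤ z) :
    Phip P V y - Phip P V z = ∫ ω in {ω | V ω > y ∧ V ω ≤ z}, V ω ∂P := by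
  have : {ω | V ω > y} = {ω | V ω > y ∧ V ω ≤ z} ∪ {ω | V ω > z} := by
    ext ω; simp only [mem_ofPred_eq, mem_union]
    constructor
    · intro h; rcases le_or_gt (V ω) z with h1 | h1
      · exact Or.inl ⟨h, h1⟩
      · exact Or.inr h1
    · rintro (h | h)
      · exact h.1
      · exact lt_of_le_of_lt hyz h
  unfold Phip
  rw [this, setIntegral_union _ (ms_gt hVm z) hV.integrableOn hV.integrableOn]
  · ring
  · rw [Set.disjoint_left]; intro ω h1 h2
    exact absurd h1.2 (not_le.2 h2)

lemma Pip_anti (hVm : Measurable V) : Antitone (Pip P V) := fun y z hyz => by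
  have := Pip_diff (P := P) hVm hyz
  have h2 : 0 ≤ (P {ω | V ω > y ∧ V ω ≤ z}).toReal := ENNReal.toReal_nonneg
  linarith

lemma Phip_ge (hVm : Measurable V) (hV : Integrable V P) {y z : ℝ} (hyz : y ≤ z) :
    y * (Pip P V y - Pip P V z) ≤ Phip P V y - Phip P V z := by
  rw [Phip_diff hVm hV hyz, Pip_diff hVm hyz]
  exact set_ge hV (ms_oc hVm y z) (Eventually.of_forall fun ω h => h.1.le)

lemma Phip_le (hVm : Measurable V) (hV : Integrable V P) {y z : ℝ} (hyz : y ≤ z) :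
    Phip P V y - Phip P V z ≤ z * (Pip P V y - Pip P V z) := by
  rw [Phip_diff hVm hV hyz, Pip_diff hVm hyz]
  exact set_le hV (ms_oc hVm y z) (Eventually.of_forall fun ω h => h.2)

lemma Phip_leM (hVm : Measurable V) (hV : Integrable V P) (hs : SuppIoo P V m M) (y : ℝ) :
    Phip P V y ≤ M * Pip P V y :=
  set_le hV (ms_gt hVm y) (hs.2.1.mono fun _ h _ => h.2)

lemma Phip_gem (hVm : Measurable V) (hV : Integrable V P) (hs : SuppIoo P V m M) (y : ℝ) :
    m * Pip P V y ≤ Phip P V y :=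
  set_ge hV (ms_gt hVm y) (hs.2.1.mono fun _ h _ => h.1)

lemma Phip_gey (hVm : Measurable V) (hV : Integrable V P) (y : ℝ) :
    y * Pip P V y ≤ Phip P V y :=
  set_ge hV (ms_gt hVm y) (Eventually.of_forall fun _ h => le_of_lt h)

lemma Phim_leM (hVm : Measurable V) (hV : Integrable V P) (hs : SuppIoo P V m M) (y : ℝ) :
    Phim P V y ≤ M * Pim P V y :=
  set_le hV (ms_le hVm y) (hs.2.1.mono fun _ h _ => h.2)

lemma Phim_gem (hVm : Measurable V) (hV : Integrable V P) (hs : SuppIoo P V m M) (y : ℝ) :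
    m * Pim P V y ≤ Phim P V y :=
  set_ge hV (ms_le hVm y) (hs.2.1.mono fun _ h _ => h.1)

lemma setcompl_gt (y : ℝ) : {ω | V ω > y}ᶜ = {ω | V ω ≤ y} := by ext; simp

lemma Phim_eq (hVm : Measurable V) (hV : Integrable V P) (y : ℝ) :
    Phim P V y = (∫ ω, V ω ∂P) - Phip P V y := by
  have := integral_add_compl (ms_gt hVm y) hV
  rw [setcompl_gt] at this
  unfold Phim Phip; linarith

lemma Pim_eq (hVm : Measurable V) (y : ℝ) : Pim P V y = 1 - Pip P V y := by
  have := prob_compl_eq_one_sub (μ := P) (ms_gt hVm y)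
  rw [setcompl_gt] at this
  unfold Pim Pip
  rw [this, ENNReal.toReal_sub_of_le prob_le_one ENNReal.one_ne_top, ENNReal.toReal_one]

lemma Pip_pos (hs : SuppIoo P V m M) {y : ℝ} (hy : y < M) : 0 < Pip P V y :=
  ENNReal.toReal_pos (hs.2.2.1 y hy).ne' (measure_ne_top _ _)

lemma Pim_pos (hs : SuppIoo P V m M) {y : ℝ} (hy : m < y) : 0 < Pim P V y :=
  ENNReal.toReal_pos (hs.2.2.2 y hy).ne' (measure_ne_top _ _)

lemma Pip_nn (y : ℝ) : 0 ≤ Pip P V y := ENNReal.toReal_nonneg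
lemma Pim_nn (y : ℝ) : 0 ≤ Pim P V y := ENNReal.toReal_nonneg
lemma Pip_le1 (y : ℝ) : Pip P V y ≤ 1 := measureReal_le_one (μ := P)
lemma Pim_le1 (y : ℝ) : Pim P V y ≤ 1 := measureReal_le_one (μ := P)

lemma Pip_meas (hVm : Measurable V) : Measurable (Pip P V) := (Pip_anti hVm).measurable
lemma Phip_meas (hVm : Measurable V) (hV : Integrable V P) (hs : SuppIoo P V m M) : Measurable (Phip P V) := by
  have h1 : Antitone fun y => M * Pip P V y - Phip P V y := fun y z hyz => by
    have a := Phip_diff hVm hV hyz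
    have b := Pip_diff (P := P) hVm hyz
    have := set_le hV (ms_oc hVm y z) (c := M) (hs.2.1.mono fun _ h _ => h.2)
    rw [← a, ← b] at this
    simp only; linarith
  have := ((Pip_meas (P := P) hVm).const_mul M).sub h1.measurable
  convert this using 1
  ext y; simp

lemma abs_bd {A B : ℝ} (hB : 0 ≤ B) (h1 : m * B ≤ A) (h2 : A ≤ M * B) : |A| ≤ max |m| |M| * B := by
  have a1 : M * B ≤ max |m| |M| * B := by
    gcongr; exact (le_abs_self M).trans (le_max_right _ _)
  have a2 : -(max |m| |M|) * B ≤ m * B := by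
    gcongr; linarith [neg_abs_le m, le_max_left |m| |M|]
  rw [abs_le]; constructor <;> linarith
end prob
section meas
variable {σ : ℝ}

lemma gcr_eq (a : ℝ → ℝ) (x : ℝ) : ∫ z, a z * gq σ (x - z) = gc σ a x := by
  unfold gc; congr 1; ext z; ring

lemma aesm_of (hσ : 0 < σ) {a : ℝ → ℝ} {x : ℝ} (h : AEStronglyMeasurable (fun z => gq σ (x - z) * a z) volume) :
    AEStronglyMeasurable a volume := by
  have h2 : AEStronglyMeasurable (fun z => (gq σ (x - z))⁻¹) volume := by
    apply Continuous.aestronglyMeasurable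
    exact ((gq_cont σ).comp (by fun_prop)).inv₀ fun z => (gq_pos hσ _).ne'
  have := h2.mul h
  refine this.congr (Eventually.of_forall fun z => ?_)
  have := gq_pos hσ (x - z)
  simp only [Pi.mul_apply]
  field_simp

lemma gc_meas (hσ : 0 < σ) {a : ℝ → ℝ} {C : ℝ} (hb : ∀ z, |a z| ≤ C) : Measurable (gc σ a) := by
  by_cases ha : AEStronglyMeasurable a volume
  · set a' := fun z => max (-C) (min C (ha.mk a z)) with ha'
    have hm : Measurable a' := measurable_const.max (measurable_const.min ha.stronglyMeasurable_mk.measurable)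
    have hC : 0 ≤ C := (abs_nonneg _).trans (hb 0)
    have hbd : ∀ z, |a' z| ≤ C := fun z => by
      rw [abs_le]; exact ⟨le_max_left _ _, max_le (by linarith) (min_le_left _ _)⟩
    have : gc σ a = gc σ a' := by
      ext x
      unfold gc
      apply integral_congr_ae
      filter_upwards [ha.ae_eq_mk] with z hz
      rw [ha']
      simp only
      rw [← hz, min_eq_right (abs_le.1 (hb z)).2, max_eq_right (abs_le.1 (hb z)).1]
    rw [this]
    exact (gc_cont hσ hm hbd).measurable
  · have : gc σ a = fun _ => 0 := by
      ext x
      unfold gc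
      apply integral_undef
      intro h
      exact ha (aesm_of hσ h.aestronglyMeasurable)
    rw [this]; exact measurable_const

lemma gq_int' (hσ : 0 < σ) {a : ℝ → ℝ} {C : ℝ} (hb : ∀ z, |a z| ≤ C) (ha : AEStronglyMeasurable a volume) (y : ℝ) :
    Integrable (fun z => gq σ (y - z) * a z) := by
  apply (gq_int hσ y).mul_bdd (c := C) ha
  exact Filter.Eventually.of_forall hb

lemma gc_quot_bd (hσ : 0 < σ) {a b : ℝ → ℝ} {C : ℝ} (hC : 0 ≤ C) (hb : ∀ z, |b z| ≤ 1)
    (hab : ∀ z, |a z| ≤ C * b z) (x : ℝ) : |gc σ a x / gc σ b x| ≤ C := by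
  by_cases hbm : AEStronglyMeasurable b volume
  · by_cases ham : AEStronglyMeasurable a volume
    · have ha : ∀ z, |a z| ≤ C := fun z => (hab z).trans (by nlinarith [(abs_le.1 (hb z)).2])
      have h1 := gq_int' hσ ha ham x
      have h2 := gq_int' hσ hb hbm x
      have h3 : |gc σ a x| ≤ C * gc σ b x := by
        unfold gc
        rw [← integral_const_mul]
        refine (abs_integral_le_integral_abs).trans (integral_mono h1.abs (h2.const_mul C) fun z => ?_)
        have := gq_pos hσ (x - z)
        simp only
        rw [abs_mul, abs_of_pos this]
        nlinarith [hab z]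
      rcases hC.eq_or_lt with h0 | h0
      · rw [← h0, zero_mul] at h3
        rw [abs_div, le_antisymm h3 (abs_nonneg _), zero_div]; exact hC
      · have h4 : 0 ≤ gc σ b x := by
          have := (abs_nonneg _).trans h3
          exact nonneg_of_mul_nonneg_right this h0
        rw [abs_div, abs_of_nonneg h4]
        exact div_le_of_le_mul₀ h4 hC h3
    · have : gc σ a x = 0 := integral_undef fun h => ham (aesm_of hσ h.aestronglyMeasurable)
      rw [this, zero_div, abs_zero]; exact hC
  · have : gc σ b x = 0 := integral_undef fun h => hbm (aesm_of hσ h.aestronglyMeasurable)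
    rw [this, div_zero, abs_zero]; exact hC

lemma gc_pos' (hσ : 0 < σ) {b : ℝ → ℝ} {C : ℝ} (hm : Measurable b) (hb : ∀ z, |b z| ≤ C) (h0 : ∀ z, 0 < b z) (y : ℝ) :
    0 < gc σ b y := by
  unfold gc
  rw [integral_pos_iff_support_of_nonneg (fun z => (mul_pos (gq_pos hσ _) (h0 z)).le) (gq_mul_int hσ hm hb y)]
  have : Function.support (fun z => gq σ (y - z) * b z) = univ := by
    ext z; simp [(gq_pos hσ (y - z)).ne', (h0 z).ne']
  rw [this]; simp

lemma gqbar_int (hσ : 0 < σ) {φ : ℝ → ℝ} {C : ℝ} (hm : Measurable φ) (hb : ∀ z, |φ z| ≤ C) {x : ℝ} (hx : x ≠ 0) :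
    Integrable (fun z => gqbar σ x z * φ z) ∧ ∫ z, gqbar σ x z * φ z = (∫ y in (0:ℝ)..x, gc σ φ y) / x := by
  have hI : Integrable (Function.uncurry fun y z => gq σ (y - z) * φ z)
      ((volume.restrict (uIoc 0 x)).prod volume) := by
    rw [integrable_prod_iff]
    · constructor
      · exact Eventually.of_forall fun y => gq_mul_int hσ hm hb y
      · have : (fun y => ∫ z, ‖Function.uncurry (fun y z => gq σ (y - z) * φ z) (y, z)‖) = gc σ (fun z => |φ z|) := by
          ext y
          unfold gc
          congr 1; ext z
          simp only [Function.uncurry, Real.norm_eq_abs, abs_mul, abs_of_pos (gq_pos hσ (y - z))]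
        rw [this]
        have hc := gc_cont hσ (h := fun z => |φ z|) (C := C) hm.abs (fun z => by rw [abs_abs]; exact hb z)
        exact (hc.integrableOn_uIcc (a := 0) (b := x)).mono_set uIoc_subset_uIcc
    · apply Measurable.aestronglyMeasurable
      exact (((gq_cont σ).measurable.comp (measurable_fst.sub measurable_snd))).mul (hm.comp measurable_snd)
  have e : ∀ z, gqbar σ x z * φ z = (1 / x) * ∫ y in (0:ℝ)..x, gq σ (y - z) * φ z := fun z => by
    unfold gqbar
    rw [if_neg hx, intervalIntegral.integral_mul_const, mul_assoc]
  have hsw := intervalIntegral_integral_swap hI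
  constructor
  · simp_rw [e]
    apply Integrable.const_mul
    simp_rw [intervalIntegral.intervalIntegral_eq_integral_uIoc]
    exact hI.integral_prod_right.smul (_ : ℝ)
  · simp_rw [e]
    rw [integral_const_mul, ← hsw]
    unfold gc; ring
end meas

open MeasureTheory Filter Set

set_option linter.unusedSectionVars false
section build
variable {Ω : Type*} [MeasurableSpace Ω] {P : Measure Ω} [IsProbabilityMeasure P] {V : Ω → ℝ} {m M σ : ℝ} {N : ℕ} {F : ℝ → ℝ}

lemma phip_eq (x : ℝ) : phip P V σ F x = gc σ (fun z => Phip P V (F z)) x / gc σ (fun z => Pip P V (F z)) x := by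
  unfold phip; rw [gcr_eq (fun z => Phip P V (F z)), gcr_eq (fun z => Pip P V (F z))]

lemma phim_eq (x : ℝ) : phim P V σ F x = gc σ (fun z => Phim P V (F z)) x / gc σ (fun z => Pim P V (F z)) x := by
  unfold phim; rw [gcr_eq (fun z => Phim P V (F z)), gcr_eq (fun z => Pim P V (F z))]

lemma Pip_abs (y : ℝ) : |Pip P V y| ≤ 1 := by rw [abs_of_nonneg (Pip_nn y)]; exact Pip_le1 y
lemma Pim_abs (y : ℝ) : |Pim P V y| ≤ 1 := by rw [abs_of_nonneg (Pim_nn y)]; exact Pim_le1 y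

lemma Phip_abs (hVm : Measurable V) (hV : Integrable V P) (hs : SuppIoo P V m M) (y : ℝ) :
    |Phip P V y| ≤ max |m| |M| * Pip P V y :=
  abs_bd (Pip_nn y) (Phip_gem hVm hV hs y) (Phip_leM hVm hV hs y)
lemma Phim_abs (hVm : Measurable V) (hV : Integrable V P) (hs : SuppIoo P V m M) (y : ℝ) :
    |Phim P V y| ≤ max |m| |M| * Pim P V y :=
  abs_bd (Pim_nn y) (Phim_gem hVm hV hs y) (Phim_leM hVm hV hs y)

lemma Cnn : 0 ≤ max |m| |M| := (abs_nonneg m).trans (le_max_left _ _)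

lemma Phip_abs' (hVm : Measurable V) (hV : Integrable V P) (hs : SuppIoo P V m M) (y : ℝ) :
    |Phip P V y| ≤ max |m| |M| := (Phip_abs hVm hV hs y).trans (by
    nlinarith [Cnn (m := m) (M := M), Pip_le1 (P := P) (V := V) y])
lemma Phim_abs' (hVm : Measurable V) (hV : Integrable V P) (hs : SuppIoo P V m M) (y : ℝ) :
    |Phim P V y| ≤ max |m| |M| := (Phim_abs hVm hV hs y).trans (by
    nlinarith [Cnn (m := m) (M := M), Pim_le1 (P := P) (V := V) y])

lemma phig_meas (hVm : Measurable V) (hV : Integrable V P) (hs : SuppIoo P V m M) (hσ : 0 < σ) :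
    Measurable (phig P V σ F) := by
  have h1 : Measurable (phip P V σ F) := by
    rw [funext (phip_eq (P := P) (V := V) (σ := σ) (F := F))]
    exact (gc_meas hσ fun z => Phip_abs' hVm hV hs (F z)).div (gc_meas hσ fun z => Pip_abs (F z))
  have h2 : Measurable (phim P V σ F) := by
    rw [funext (phim_eq (P := P) (V := V) (σ := σ) (F := F))]
    exact (gc_meas hσ fun z => Phim_abs' hVm hV hs (F z)).div (gc_meas hσ fun z => Pim_abs (F z))
  unfold phig
  exact Measurable.ite measurableSet_Ici h1 h2

lemma phig_bd (hVm : Measurable V) (hV : Integrable V P) (hs : SuppIoo P V m M) (hσ : 0 < σ) (x : ℝ) :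
    |phig P V σ F x| ≤ max |m| |M| := by
  unfold phig
  split_ifs
  · rw [phip_eq]
    exact gc_quot_bd hσ Cnn (fun z => Pip_abs (F z)) (fun z => Phip_abs hVm hV hs (F z)) x
  · rw [phim_eq]
    exact gc_quot_bd hσ Cnn (fun z => Pim_abs (F z)) (fun z => Phim_abs hVm hV hs (F z)) x

lemma F_eq (hVm : Measurable V) (hV : Integrable V P) (hs : SuppIoo P V m M) (hσ : 0 < σ)
    (hF : SolvesE P V σ N F) {x : ℝ} (hx : x ≠ 0) :
    F x = 1 / (N:ℝ) * gc σ (phig P V σ F) x +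
      ((N:ℝ) - 1) / N * ((∫ y in (0:ℝ)..x, gc σ (phig P V σ F) y) / x) := by
  have hm := phig_meas (F := F) hVm hV hs hσ
  have hb := phig_bd (F := F) hVm hV hs hσ
  obtain ⟨h1, h2⟩ := gqbar_int hσ hm hb hx
  have h3 := gq_mul_int hσ hm hb x
  rw [hF x, ← h2]
  unfold gc
  rw [← integral_const_mul, ← integral_const_mul, ← integral_add (h3.const_mul _) (h1.const_mul _)]
  congr 1; ext z; ring

lemma F_meas (hVm : Measurable V) (hV : Integrable V P) (hs : SuppIoo P V m M) (hσ : 0 < σ)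
    (hF : SolvesE P V σ N F) : Measurable F := by
  have hc := gc_cont hσ (phig_meas (F := F) hVm hV hs hσ) (phig_bd (F := F) hVm hV hs hσ)
  have hc2 : Continuous fun x => ∫ y in (0:ℝ)..x, gc σ (phig P V σ F) y :=
    intervalIntegral.continuous_primitive (fun a b => hc.intervalIntegrable a b) 0
  have : F = fun x => if x = 0 then F 0 else 1 / (N:ℝ) * gc σ (phig P V σ F) x +
      ((N:ℝ) - 1) / N * ((∫ y in (0:ℝ)..x, gc σ (phig P V σ F) y) / x) := by
    ext x
    split_ifs with h
    · rw [h]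
    · exact F_eq hVm hV hs hσ hF h
  rw [this]
  exact Measurable.ite (measurableSet_singleton 0) measurable_const
    ((hc.measurable.const_mul _).add ((hc2.measurable.div measurable_id).const_mul _))

lemma quot_mem (hσ : 0 < σ) {a b : ℝ → ℝ} {C : ℝ} (ha : Measurable a) (hb : Measurable b) (hac : ∀ z, |a z| ≤ C)
    (hbc : ∀ z, |b z| ≤ 1) (h0 : ∀ z, 0 < b z) (h1 : ∀ z, m * b z ≤ a z) (h2 : ∀ z, a z ≤ M * b z) (x : ℝ) :
    m ≤ gc σ a x / gc σ b x ∧ gc σ a x / gc σ b x ≤ M := by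
  have hp := gc_pos' hσ hb hbc h0 x
  have bb : ∀ c : ℝ, ∀ z, |c * b z| ≤ |c| := fun c z => by
    rw [abs_mul]; nlinarith [hbc z, abs_nonneg c]
  rw [le_div_iff₀ hp, div_le_iff₀ hp, ← gc_const_mul, ← gc_const_mul]
  exact ⟨gc_mono hσ (hb.const_mul m) (bb m) ha hac h1 x, gc_mono hσ ha hac (hb.const_mul M) (bb M) h2 x⟩

lemma phig_mem (hVm : Measurable V) (hV : Integrable V P) (hs : SuppIoo P V m M) (hσ : 0 < σ)
    (hFr : ∀ x, F x ∈ Ioo m M) (hFm : Measurable F) (x : ℝ) : m ≤ phig P V σ F x ∧ phig P V σ F x ≤ M := by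
  have mPip := (Pip_meas (P := P) hVm)
  have mPhip := (Phip_meas (P := P) hVm hV hs)
  unfold phig
  split_ifs
  · rw [phip_eq]
    exact quot_mem hσ (mPhip.comp hFm) (mPip.comp hFm) (fun z => Phip_abs' hVm hV hs (F z)) (fun z => Pip_abs (F z))
      (fun z => Pip_pos hs (hFr z).2) (fun z => Phip_gem hVm hV hs _) (fun z => Phip_leM hVm hV hs _) x
  · rw [phim_eq]
    have h1 : Measurable (Phim P V) := by
      rw [funext (Phim_eq hVm hV)]; exact mPhip.const_sub _
    have h2 : Measurable (Pim P V) := by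
      rw [funext (Pim_eq (P := P) hVm)]; exact mPip.const_sub _
    exact quot_mem hσ (h1.comp hFm) (h2.comp hFm) (fun z => Phim_abs' hVm hV hs (F z)) (fun z => Pim_abs (F z))
      (fun z => Pim_pos hs (hFr z).1) (fun z => Phim_gem hVm hV hs _) (fun z => Phim_leM hVm hV hs _) x

/-- `p(v) = Π⁺(M - v)`. -/
noncomputable def pv (P : Measure Ω) (V : Ω → ℝ) (M v : ℝ) : ℝ := Pip P V (M - v)
/-- `S(v) = M - Ψ⁺(M - v)`. -/
noncomputable def Sv (P : Measure Ω) (V : Ω → ℝ) (M v : ℝ) : ℝ := M - Psip P V (M - v)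
/-- `κ(v) = M Π⁺(M - v) - Φ⁺(M - v)`. -/
noncomputable def kv (P : Measure Ω) (V : Ω → ℝ) (M v : ℝ) : ℝ := M * Pip P V (M - v) - Phip P V (M - v)

lemma pv_pos (hs : SuppIoo P V m M) {v : ℝ} (hv : 0 < v) : 0 < pv P V M v := Pip_pos hs (by linarith)

lemma Sv_eq (hs : SuppIoo P V m M) {v : ℝ} (hv : 0 < v) : Sv P V M v = kv P V M v / pv P V M v := by
  have : 0 < Pip P V (M - v) := pv_pos hs hv
  unfold Sv kv pv Psip
  field_simp

lemma kv_nn (hVm : Measurable V) (hV : Integrable V P) (hs : SuppIoo P V m M) (v : ℝ) : 0 ≤ kv P V M v := by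
  have := Phip_leM hVm hV hs (M - v)
  unfold kv; linarith

lemma kv_le (hVm : Measurable V) (hV : Integrable V P) (v : ℝ) : kv P V M v ≤ v * pv P V M v := by
  have := Phip_gey hVm hV (M - v)
  unfold kv pv; linarith

lemma kv_leH (hVm : Measurable V) (hV : Integrable V P) (hs : SuppIoo P V m M) (v : ℝ) :
    kv P V M v ≤ (M - m) * pv P V M v := by
  have := Phip_gem hVm hV hs (M - v)
  unfold kv pv; linarith

lemma kv_d1 (hVm : Measurable V) (hV : Integrable V P) {v w : ℝ} (h : v ≤ w) :
    v * (pv P V M w - pv P V M v) ≤ kv P V M w - kv P V M v := by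
  have := Phip_le hVm hV (show M - w ≤ M - v by linarith)
  unfold kv pv; linarith

lemma kv_d2 (hVm : Measurable V) (hV : Integrable V P) {v w : ℝ} (h : v ≤ w) :
    kv P V M w - kv P V M v ≤ w * (pv P V M w - pv P V M v) := by
  have := Phip_ge hVm hV (show M - w ≤ M - v by linarith)
  unfold kv pv; linarith

lemma pv_mono (hVm : Measurable V) {v w : ℝ} (h : v ≤ w) : pv P V M v ≤ pv P V M w :=
  Pip_anti hVm (by linarith)

theorem buildCore (hVm : Measurable V) (hV : Integrable V P) (hs : SuppIoo P V m M) (hσ : 0 < σ) (hN : 2 ≤ N)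
    (hFr : ∀ x, F x ∈ Ioo m M) (hF : SolvesE P V σ N F) :
    Core σ (M - m) N (pv P V M) (Sv P V M) (fun x => M - F x) (fun x => M - phig P V σ F x) := by
  have hFm := F_meas hVm hV hs hσ hF
  have mPip := (Pip_meas (P := P) hVm)
  have mPhip := (Phip_meas (P := P) hVm hV hs)
  have hpm := phig_meas (F := F) hVm hV hs hσ
  have hpb := phig_bd (F := F) hVm hV hs hσ
  have hmem := phig_mem hVm hV hs hσ hFr hFm
  have hN0 : (N:ℝ) ≠ 0 := by
    have : N ≠ 0 := by omega
    exact_mod_cast this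
  refine ⟨hσ, by linarith [hs.1], hN, fun v hv => pv_pos hs hv, fun v _ => Pip_le1 _, fun v w _ h => pv_mono hVm h,
    ?_, ?_, ?_, ?_, fun x => by linarith [(hFr x).2], fun x => by linarith [(hFr x).1], ?_, ?_, hpm.const_sub M,
    fun z => by linarith [(hmem z).2], fun z => by linarith [(hmem z).1], ?_, ?_⟩
  · intro v hv
    rw [Sv_eq hs hv]
    exact div_nonneg (kv_nn hVm hV hs v) (pv_pos hs hv).le
  · intro v w hv hvw
    have hw : 0 < w := by linarith
    have p1 := pv_pos hs hv
    have p2 := pv_pos hs hw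
    rw [Sv_eq hs hv, Sv_eq hs hw, div_le_div_iff₀ p1 p2]
    have a1 := mul_le_mul_of_nonneg_right (kv_d1 (M := M) hVm hV hvw) p1.le
    have a2 := mul_le_mul_of_nonneg_right (kv_le (M := M) hVm hV v)
      (show 0 ≤ pv P V M w - pv P V M v by linarith [pv_mono (P := P) (M := M) hVm hvw])
    nlinarith
  · intro v hv
    rw [Sv_eq hs hv, div_le_iff₀ (pv_pos hs hv)]
    exact kv_leH hVm hV hs v
  · intro b v hb hbv
    have hv : 0 < v := by linarith
    have p1 := pv_pos hs hb
    have p2 := pv_pos hs hv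
    rw [Sv_eq hs hv, div_le_iff₀ p2]
    have a1 := kv_d2 (M := M) hVm hV hbv
    have a2 := kv_le (M := M) hVm hV b
    have a3 : pv P V M v ≤ 1 := Pip_le1 _
    have a4 : (v - b) * pv P V M b * pv P V M v ≤ (v - b) * pv P V M b * 1 := by
      apply mul_le_mul_of_nonneg_left a3
      exact mul_nonneg (by linarith) p1.le
    nlinarith
  · simp only [pv, sub_sub_cancel]
    exact mPip.comp hFm
  · simp only [Sv, sub_sub_cancel, Psip]
    exact ((mPhip.comp hFm).div (mPip.comp hFm)).const_sub M
  · intro y hy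
    have e1 : (fun z => Sv P V M (M - F z) * pv P V M (M - F z)) = fun z => M * Pip P V (F z) + (-1) * Phip P V (F z) := by
      ext z
      have := Pip_pos hs (hFr z).2
      simp only [Sv, pv, sub_sub_cancel, Psip]
      field_simp
      ring
    have e2 : (fun z => pv P V M (M - F z)) = fun z => Pip P V (F z) := by
      ext z; simp only [pv, sub_sub_cancel]
    rw [e1, e2, gc_add hσ (f := fun z => M * Pip P V (F z)) (k := fun z => (-1) * Phip P V (F z)) (C := |M|) (D := max |m| |M|) ((mPip.comp hFm).const_mul M) _ ((mPhip.comp hFm).const_mul (-1)) _,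
      gc_const_mul, gc_const_mul]
    · have hp := gc_pos' hσ (b := fun z => Pip P V (F z)) (mPip.comp hFm) (fun z => Pip_abs (F z)) (fun z => Pip_pos hs (hFr z).2) y
      unfold phig
      rw [if_pos hy, phip_eq]
      field_simp
      ring
    · intro z; rw [abs_mul]; nlinarith [Pip_abs (P := P) (V := V) (F z), abs_nonneg M]
    · intro z; rw [neg_one_mul, abs_neg]; exact Phip_abs' hVm hV hs (F z)
  · intro x hx
    have e : ∀ y, gc σ (fun x => M - phig P V σ F x) y = M - gc σ (phig P V σ F) y := by
      intro y
      have := gc_add hσ (f := fun _ => M) (k := fun z => (-1) * phig P V σ F z) (C := |M|) (D := max |m| |M|)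
        measurable_const (fun _ => le_rfl) (hpm.const_mul (-1)) (fun z => by
          rw [neg_one_mul, abs_neg]; exact hpb z) y
      rw [gc_const hσ, gc_const_mul] at this
      rw [show (fun x => M - phig P V σ F x) = fun z => M + (-1) * phig P V σ F z by ext z; ring, this]
      ring
    have hc := gc_cont hσ hpm hpb
    simp only [e]
    rw [intervalIntegral.integral_sub (by simp) (hc.intervalIntegrable _ _), intervalIntegral.integral_const,
      F_eq hVm hV hs hσ hF hx.ne']
    simp only [smul_eq_mul, sub_zero]
    field_simp
    ring
end build

open MeasureTheory Filter Set

section reg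
variable {Ω : Type*} [MeasurableSpace Ω] {P : Measure Ω} [IsProbabilityMeasure P] {V : Ω → ℝ} {m M σ L : ℝ} {N : ℕ} {u h : ℝ → ℝ}

lemma kv_deriv (hVm : Measurable V) (hV : Integrable V P) {v p' : ℝ} (hp : HasDerivAt (pv P V M) p' v) :
    HasDerivAt (kv P V M) (v * p') v := by
  have he : HasDerivAt (fun w => kv P V M w - kv P V M v - v * (pv P V M w - pv P V M v)) 0 v := by
    rw [hasDerivAt_iff_isLittleO]
    simp only [sub_self, mul_zero, sub_zero, smul_zero]
    rw [Asymptotics.isLittleO_iff]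
    intro c hc
    have hcont := hp.continuousAt
    filter_upwards [Metric.tendsto_nhds.1 hcont c hc] with w hw
    rw [Real.dist_eq] at hw
    rw [Real.norm_eq_abs, Real.norm_eq_abs]
    have : |kv P V M w - kv P V M v - v * (pv P V M w - pv P V M v)| ≤ |pv P V M w - pv P V M v| * |w - v| := by
      rcases le_total v w with h | h
      · have a1 := kv_d1 (M := M) hVm hV h
        have a2 := kv_d2 (M := M) hVm hV h
        have a3 := pv_mono (P := P) (M := M) hVm h
        rw [abs_of_nonneg (by linarith), abs_of_nonneg (by linarith), abs_of_nonneg (by linarith)]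
        nlinarith
      · have a1 := kv_d1 (M := M) hVm hV h
        have a2 := kv_d2 (M := M) hVm hV h
        have a3 := pv_mono (P := P) (M := M) hVm h
        rw [abs_of_nonneg (by nlinarith), abs_of_nonpos (by linarith), abs_of_nonpos (by linarith)]
        nlinarith
    refine this.trans ?_
    gcongr
  have h2 := (he.add ((hp.sub_const (pv P V M v)).const_mul v)).add_const (kv P V M v)
  rw [zero_add] at h2
  refine h2.congr_of_eventuallyEq (Eventually.of_forall fun w => ?_)
  show kv P V M w = (kv P V M w - kv P V M v - v * (pv P V M w - pv P V M v)) + v * (pv P V M w - pv P V M v) + kv P V M v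
  ring

theorem buildReg (hVm : Measurable V) (hV : Integrable V P) (hs : SuppIoo P V m M)
    (c : Core σ (M - m) N (pv P V M) (Sv P V M) u h)
    (hC1 : ContDiffOn ℝ 1 (Pip P V) (Ioo m M))
    (hL : Tendsto (deriv (Psip P V)) (nhdsWithin M (Iio M)) (nhds L)) :
    Reg (M - m) (pv P V M) (Sv P V M) (fun v => deriv (Psip P V) (M - v)) L := by
  have key : ∀ v, 0 < v → v < M - m → ∃ p', HasDerivAt (pv P V M) p' v ∧
      HasDerivAt (Sv P V M) (p' * (v - Sv P V M v) / pv P V M v) v := by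
    intro v hv hvH
    have hd : DifferentiableAt ℝ (Pip P V) (M - v) :=
      (hC1.differentiableOn one_ne_zero).differentiableAt (Ioo_mem_nhds (by linarith) (by linarith))
    have hp : HasDerivAt (pv P V M) (deriv (Pip P V) (M - v) * (-1)) v :=
      HasDerivAt.comp v hd.hasDerivAt ((hasDerivAt_id v).const_sub M)
    refine ⟨_, hp, ?_⟩
    have p0 := pv_pos hs hv
    have hk := (kv_deriv hVm hV hp).div hp p0.ne'
    have hk2 : HasDerivAt (Sv P V M) _ v := hk.congr_of_eventuallyEq (by
      filter_upwards [lt_mem_nhds hv] with w hw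
      exact Sv_eq hs hw)
    convert hk2 using 1
    rw [Sv_eq hs hv]
    field_simp
    ring
  have hder : ∀ v p', 0 < v → HasDerivAt (Sv P V M) p' v → deriv (Psip P V) (M - v) = p' := by
    intro v p' hv hS
    have h1 : HasDerivAt (fun y => M - Sv P V M (M - y)) (-(p' * (-1))) (M - v) := by
      refine (HasDerivAt.comp (M - v) (h₂ := Sv P V M) (h := fun y => M - y) ?_ ((hasDerivAt_id (M - v)).const_sub M)).const_sub M
      simpa using hS
    have h2 : (fun y => M - Sv P V M (M - y)) = Psip P V := by
      ext y; simp [Sv]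
    rw [h2] at h1
    rw [h1.deriv]; ring
  refine ⟨fun v hv hvH => ?_, fun v hv hvH => ?_, ?_⟩
  · obtain ⟨p', h1, h2⟩ := key v hv hvH
    rw [hder v _ hv h2]; exact h2
  · obtain ⟨p', h1, h2⟩ := key v hv hvH
    have p0 := pv_pos hs hv
    have hr : 0 < v - Sv P V M v := by
      have := c.S_gap (v / 2) v (by linarith) (by linarith)
      have := mul_pos (show 0 < v - v / 2 by linarith) (pv_pos hs (show 0 < v / 2 by linarith))
      linarith
    have h3 := h1.log p0.ne'
    rw [hder v _ hv h2]
    convert h3 using 1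
    field_simp
  · refine hL.comp ?_
    rw [tendsto_nhdsWithin_iff]
    constructor
    · have : Tendsto (fun v : ℝ => M - v) (nhds 0) (nhds (M - 0)) := (continuous_const.sub continuous_id).tendsto 0
      rw [sub_zero] at this
      exact this.mono_left nhdsWithin_le_nhds
    · filter_upwards [self_mem_nhdsWithin] with v hv
      have : 0 < v := hv
      simp only [mem_Iio]; linarith
end reg

/-- Let `N ≥ 2`, `Π⁺` be `C¹` on `(m,M)` with `Ψ⁺ₓ(M) = lim_{x→M⁻} (Ψ⁺)'(x)`
existing, and let `F` be a solution of (E) with values in `(m,M)`. Then (a) `M − F` is regularly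
varying at `∞` of index `ρ⁺ = (Ψ⁺ₓ(M) − 1)/(1 − Ψ⁺ₓ(M)/N)`; (b) if moreover `Ψ⁺ₓ(M) = 1` and
`(Ψ⁺(x) − x)/(M − x)^{n+1} → 1/k` as `x → M⁻` for some `n ≥ 1`, `k ∈ (0,∞)`, then
`M − F(x) ∼ ((N/(N−1))·(n/k))^{−1/n}·(log x)^{−1/n}` as `x → ∞`. -/
theorem stmt18 {Ω : Type*} [MeasurableSpace Ω] (P : Measure Ω) [IsProbabilityMeasure P]
    (V : Ω → ℝ) (hVmeas : Measurable V) (hV : Integrable V P)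
    (m M : ℝ) (hsupp : SuppIoo P V m M)
    (σ : ℝ) (hσ : 0 < σ) (N : ℕ) (hN : 2 ≤ N)
    (hC1 : ContDiffOn ℝ 1 (Pip P V) (Set.Ioo m M))
    (L : ℝ) (hL : Tendsto (deriv (Psip P V)) (nhdsWithin M (Set.Iio M)) (nhds L))
    (F : ℝ → ℝ) (hFr : ∀ x, F x ∈ Set.Ioo m M) (hFsol : SolvesE P V σ N F) :
    (∀ x : ℝ, 0 < x →
      Tendsto (fun α : ℝ => (M - F (α * x)) / (M - F α)) atTop
        (nhds (x ^ ((L - 1) / (1 - L / (N:ℝ)))))) ∧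
    (L = 1 → ∀ n : ℕ, 1 ≤ n → ∀ k : ℝ, 0 < k →
      Tendsto (fun x : ℝ => (Psip P V x - x) / (M - x) ^ (n + 1))
        (nhdsWithin M (Set.Iio M)) (nhds (1 / k)) →
      Tendsto (fun x : ℝ => (M - F x) /
          ((((N:ℝ) / ((N:ℝ) - 1)) * ((n:ℝ) / k)) ^ (-(1:ℝ) / (n:ℝ)) *
            Real.log x ^ (-(1:ℝ) / (n:ℝ))))
        atTop (nhds 1)) := by
  have c := buildCore hVmeas hV hsupp hσ hN hFr hFsol
  have R := buildReg hVmeas hV hsupp c hC1 hL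
  refine ⟨fun x hx => c.partA R hx, ?_⟩
  rintro rfl n hn k hk hr
  refine c.partB R hn hk ?_
  have ht : Tendsto (fun v : ℝ => M - v) (nhdsWithin 0 (Ioi 0)) (nhdsWithin M (Iio M)) := by
    rw [tendsto_nhdsWithin_iff]
    constructor
    · have : Tendsto (fun v : ℝ => M - v) (nhds 0) (nhds (M - 0)) := (continuous_const.sub continuous_id).tendsto 0
      rw [sub_zero] at this
      exact this.mono_left nhdsWithin_le_nhds
    · filter_upwards [self_mem_nhdsWithin] with v hv
      have : 0 < v := hv
      simp only [mem_Iio]; linarith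
  refine (hr.comp ht).congr fun v => ?_
  simp only [Function.comp, Sv, sub_sub_cancel]
  congr 1
  ring
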